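/- For all real constants α ∈ (0,2), β ∈ (2,3), δ > 0 and ε > 0, there exists n₀ such that for all n ≥ n₀ the following holds: for every M ≥ 1 and all Boolean functions h_1, …, h_k : {0,1}^M → {0,1} with k ≤ n^α and L(h_i) ≤ n^β for every i, with probability at least 1 − ε over a random restriction ρ ~ R_p on {0,1}^M with p = 2·ln(log₂ n)/n, every i satisfies L(h_i|_ρ) ≤ n^{β − 2 + δ}. -/

import Mathlib

/-- A De Morgan formula over variables indexed by `ι`: leaves are literals
(`b = true` for `x i`, `b = false` for `¬ x i`), internal gates are binary
AND/OR gates. -/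
inductive DMF (ι : Type) : Type
  | leaf (i : ι) (b : Bool) : DMF ι
  | and (φ ψ : DMF ι) : DMF ι
  | or (φ ψ : DMF ι) : DMF ι

namespace DMF

/-- Evaluation of a De Morgan formula on an assignment. -/
def eval {ι : Type} : DMF ι → (ι → Bool) → Bool
  | leaf i b, x => if b then x i else !(x i)
  | and φ ψ, x => φ.eval x && ψ.eval x
  | or φ ψ, x => φ.eval x || ψ.eval x

/-- The size of a formula is its number of leaves. -/
def size {ι : Type} : DMF ι → ℕ
  | leaf _ _ => 1
  | and φ ψ => φ.size + ψ.size
  | or φ ψ => φ.size + ψ.size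

/-- The depth of a formula: maximum number of edges on a root-to-leaf path. -/
def depth {ι : Type} : DMF ι → ℕ
  | leaf _ _ => 0
  | and φ ψ => max φ.depth ψ.depth + 1
  | or φ ψ => max φ.depth ψ.depth + 1

/-- `topAnd φ r` holds iff every gate of `φ` at distance less than `r` from the
root is an AND gate. -/
def topAnd {ι : Type} : DMF ι → ℝ → Prop
  | leaf _ _, _ => True
  | and φ ψ, r => φ.topAnd (r - 1) ∧ ψ.topAnd (r - 1)
  | or φ ψ, r => r ≤ 0 ∧ φ.topAnd (r - 1) ∧ ψ.topAnd (r - 1)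

end DMF

open Classical in
/-- Formula complexity `L(h)`: the minimum number of leaves of a De Morgan
formula computing `h`, with the convention `L(h) = 0` for constant `h`. -/
noncomputable def Lc {ι : Type} (h : (ι → Bool) → Bool) : ℕ :=
  if ∃ c, ∀ x, h x = c then 0
  else sInf {s | ∃ φ : DMF ι, φ.size = s ∧ ∀ x, φ.eval x = h x}


/-- The function obtained from `h` by applying the restriction
`ρ ∈ {0,1,*}^M` (encoded with `none = *`): fixed coordinates take the value
prescribed by `ρ`, free coordinates take the value of the input. -/
def restrict {M : ℕ} (h : (Fin M → Bool) → Bool) (ρ : Fin M → Option Bool) :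
    (Fin M → Bool) → Bool :=
  fun x => h (fun i => (ρ i).getD (x i))

/-- The probability of a single coordinate of the random restriction `R_p`:
`*` (i.e. `none`) has probability `p`, and each of `0` and `1` has
probability `(1-p)/2`. -/
noncomputable def rWeight (p : ℝ) : Option Bool → ℝ
  | none => p
  | some _ => (1 - p) / 2

/-!
Cut each formula of size `n ^ β` into `O(n ^ β / s)` subformulas of size `s = n ^ (2 - 2 * η)`. It
suffices that each piece shrinks to bounded complexity except with probability `n ^ (-C)`, for `C`
as large as we wish; a union bound over all pieces of all formulas finishes the proof.

A function computed by a formula of size `s` has approximate degree `O(√s)`. A dual witness against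
approximation in degree `D` is a pointwise product `u * v` orthogonal to degree `D`. With `P j` the
projection onto `v · (polynomials of degree ≤ j)`, the form `⟪a, ∑ j ≤ D, P j b⟫` vanishes at
`b = u`, but pairs any `a` with `v` to `(D + 1) * ⟪a, v⟫`. Its block between `{f = 1}` and `{f = 0}`
has norm at most `2` for a literal, as multiplication by a literal raises the degree by one, and the
squared norms of such blocks add up along AND and OR gates. So the correlation of `f` with `u * v`
is `O(√s / D)`. Composing with a majority polynomial makes the Fourier weight of `f` decay
exponentially at scale `√s`.

If `U` is a maximal monomial of the restricted function, then its derivative along `U` is a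
constant nonzero integer up to sign; hence `U` is maximal with probability at most `(4 * p) ^ #U`
times the Fourier weight of `f` above `U`. Summing over `#U ≥ d` gives `O((p * √s) ^ d)`. If no
monomial has degree above `d`, then there are at most `4 ^ d` maximal ones, by Parseval, so that the
restricted function depends on at most `4 ^ d * d` variables.
-/

open scoped BigOperators

section Walsh

variable {ι : Type*}

/-- The sign of a bit: `false ↦ 1` and `true ↦ -1`. -/
def boolSign (b : Bool) : ℝ := if b then -1 else 1

lemma boolSign_mul_self (b : Bool) : boolSign b * boolSign b = 1 := by
  cases b <;> simp [boolSign]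

/-- The Walsh character of the cube `ι → Bool` attached to a set of coordinates. -/
def walsh (S : Finset ι) (x : ι → Bool) : ℝ := ∏ i ∈ S, boolSign (x i)

lemma walsh_mul_self (S : Finset ι) (x : ι → Bool) : walsh S x * walsh S x = 1 := by
  rw [walsh, ← Finset.prod_mul_distrib]
  exact Finset.prod_eq_one fun i _ => boolSign_mul_self _

lemma walsh_mul_walsh [DecidableEq ι] (S T : Finset ι) :
    walsh S * walsh T = walsh (symmDiff S T) := by
  ext x
  have prod_inter : (∏ i ∈ S ∩ T, boolSign (x i)) * ∏ i ∈ S ∩ T, boolSign (x i) = 1 :=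
    walsh_mul_self (S ∩ T) x
  have hS := Finset.prod_inter_mul_prod_sdiff S T fun i => boolSign (x i)
  have hT := Finset.prod_inter_mul_prod_sdiff T S fun i => boolSign (x i)
  rw [Finset.inter_comm] at hT
  have hST : walsh (symmDiff S T) x
      = (∏ i ∈ S \ T, boolSign (x i)) * ∏ i ∈ T \ S, boolSign (x i) :=
    Finset.prod_union disjoint_sdiff_sdiff
  rw [Pi.mul_apply, hST, walsh, walsh, ← hS, ← hT]
  linear_combination
    (∏ i ∈ S \ T, boolSign (x i)) * (∏ i ∈ T \ S, boolSign (x i)) * prod_inter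

variable [Fintype ι]

lemma sum_walsh_mul_walsh (x y : ι → Bool) :
    ∑ S, walsh S x * walsh S y = if x = y then 2 ^ Fintype.card ι else 0 := by
  classical
  simp only [walsh, ← Finset.prod_mul_distrib]
  rw [← Finset.powerset_univ, ← Finset.prod_one_add]
  split_ifs with hxy
  · simp only [hxy, boolSign_mul_self]
    norm_num
  · obtain ⟨i, hi⟩ := Function.ne_iff.mp hxy
    refine Finset.prod_eq_zero (Finset.mem_univ i) ?_
    cases hx : x i <;> cases hy : y i <;> simp_all [boolSign]

variable [DecidableEq ι]

lemma expect_walsh (S : Finset ι) : 𝔼 x, walsh S x = if S = ∅ then 1 else 0 := by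
  split_ifs with hS
  · simp [hS, walsh]
  · obtain ⟨i, hi⟩ := Finset.nonempty_iff_ne_empty.mpr hS
    have sum_factors : ∑ x : ι → Bool, walsh S x
        = ∏ j, ∑ b : Bool, (if j ∈ S then boolSign b else 1) := by
      rw [Fintype.prod_sum]
      simp only [Finset.prod_ite_mem, Finset.univ_inter, walsh]
    rw [Finset.expect, sum_factors, Finset.prod_eq_zero (Finset.mem_univ i), smul_zero]
    simp [hi, boolSign]

lemma expect_walsh_mul_walsh (S T : Finset ι) :
    𝔼 x, walsh S x * walsh T x = if S = T then 1 else 0 := by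
  have h := expect_walsh (symmDiff S T)
  rw [← walsh_mul_walsh] at h
  simpa only [Pi.mul_apply, ← Finset.bot_eq_empty, symmDiff_eq_bot] using h

/-- The Walsh–Fourier coefficient of a real function on the cube, as a linear functional of the
function. -/
noncomputable def walshCoeff (S : Finset ι) : ((ι → Bool) → ℝ) →ₗ[ℝ] ℝ where
  toFun f := 𝔼 x, f x * walsh S x
  map_add' f g := by simp only [Pi.add_apply, add_mul, Finset.expect_add_distrib]
  map_smul' c f := by simp [mul_assoc, Finset.mul_expect]

lemma walshCoeff_apply (S : Finset ι) (f : (ι → Bool) → ℝ) :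
    walshCoeff S f = 𝔼 x, f x * walsh S x := rfl

lemma sum_walshCoeff_mul_walsh (f : (ι → Bool) → ℝ) (x : ι → Bool) :
    ∑ S, walshCoeff S f * walsh S x = f x := by
  simp only [walshCoeff_apply, Finset.expect_mul, mul_assoc]
  rw [← Finset.expect_sum_comm]
  simp only [← Finset.mul_sum, sum_walsh_mul_walsh, mul_ite, mul_zero]
  rw [Fintype.expect_ite_eq']
  simp [NNRat.smul_def, mul_comm (f x)]

lemma sum_walshCoeff_sq (f : (ι → Bool) → ℝ) : ∑ S, walshCoeff S f ^ 2 = 𝔼 x, f x ^ 2 := by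
  calc ∑ S, walshCoeff S f ^ 2
      = 𝔼 x, f x * ∑ S, walshCoeff S f * walsh S x := by
        simp only [Finset.mul_sum, Finset.expect_sum_comm, sq]
        refine Finset.sum_congr rfl fun S _ => ?_
        rw [walshCoeff_apply, Finset.mul_expect]
        exact Finset.expect_congr rfl fun x _ => by rw [← walshCoeff_apply]; ring
    _ = 𝔼 x, f x ^ 2 := by simp only [sum_walshCoeff_mul_walsh, sq]

end Walsh

section LowDegree

variable {ι : Type*}

/-- The real functions on the cube whose Walsh expansion has degree at most `D`. -/
def lowDegree (ι : Type*) (D : ℕ) : Submodule ℝ ((ι → Bool) → ℝ) :=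
  Submodule.span ℝ (walsh '' {S : Finset ι | S.card ≤ D})

lemma walsh_mem_lowDegree {S : Finset ι} {D : ℕ} (hS : S.card ≤ D) : walsh S ∈ lowDegree ι D :=
  Submodule.subset_span ⟨S, hS, rfl⟩

lemma lowDegree_mono : Monotone (lowDegree ι) := fun _ _ hDD' =>
  Submodule.span_mono (Set.image_mono fun _ hS => le_trans hS hDD')

lemma one_mem_lowDegree (D : ℕ) : 1 ∈ lowDegree ι D := by
  have walsh_empty : walsh (∅ : Finset ι) = 1 := by ext; simp [walsh]
  exact walsh_empty ▸ walsh_mem_lowDegree D.zero_le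

lemma mul_mem_lowDegree {D D' : ℕ} {f g : (ι → Bool) → ℝ} (hf : f ∈ lowDegree ι D)
    (hg : g ∈ lowDegree ι D') : f * g ∈ lowDegree ι (D + D') := by
  classical
  have hle : lowDegree ι D * lowDegree ι D' ≤ lowDegree ι (D + D') := by
    rw [lowDegree, lowDegree, Submodule.span_mul_span, Submodule.span_le]
    rintro _ ⟨_, ⟨S, hS, rfl⟩, _, ⟨T, hT, rfl⟩, rfl⟩
    rw [Set.mem_ofPred_eq] at hS hT
    beta_reduce
    rw [walsh_mul_walsh]
    refine walsh_mem_lowDegree ?_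
    calc (symmDiff S T).card ≤ (S ∪ T).card := Finset.card_le_card symmDiff_le_sup
      _ ≤ S.card + T.card := Finset.card_union_le S T
      _ ≤ D + D' := add_le_add hS hT
  exact hle (Submodule.mul_mem_mul hf hg)

lemma pow_mem_lowDegree {D : ℕ} {f : (ι → Bool) → ℝ} (hf : f ∈ lowDegree ι D) (n : ℕ) :
    f ^ n ∈ lowDegree ι (n * D) := by
  induction n with
  | zero => simpa using one_mem_lowDegree 0
  | succ n ih => rw [pow_succ, Nat.succ_mul]; exact mul_mem_lowDegree ih hf

lemma aeval_mem_lowDegree {D n : ℕ} {f : (ι → Bool) → ℝ} (hf : f ∈ lowDegree ι D)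
    {P : Polynomial ℝ} (hP : P.natDegree ≤ n) : Polynomial.aeval f P ∈ lowDegree ι (n * D) := by
  rw [Polynomial.aeval_eq_sum_range' (Nat.lt_succ_of_le hP)]
  refine Submodule.sum_mem _ fun j hj => Submodule.smul_mem _ _ ?_
  have hjn : j ≤ n := Nat.lt_succ_iff.mp (Finset.mem_range.mp hj)
  exact lowDegree_mono (Nat.mul_le_mul_right D hjn) (pow_mem_lowDegree hf j)

variable [Fintype ι] [DecidableEq ι]

lemma walshCoeff_eq_zero_of_mem_lowDegree {D : ℕ} {f : (ι → Bool) → ℝ} (hf : f ∈ lowDegree ι D)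
    {S : Finset ι} (hS : D < S.card) : walshCoeff S f = 0 := by
  have hle : lowDegree ι D ≤ LinearMap.ker (walshCoeff S) := by
    rw [lowDegree, Submodule.span_le]
    rintro _ ⟨T, hT, rfl⟩
    have hTS : T ≠ S := by rintro rfl; exact absurd hT (not_le.mpr hS)
    rw [SetLike.mem_coe, LinearMap.mem_ker, walshCoeff_apply, expect_walsh_mul_walsh, if_neg hTS]
  exact LinearMap.mem_ker.mp (hle hf)

lemma sum_walshCoeff_sq_le_of_approx {D : ℕ} {f q : (ι → Bool) → ℝ} {e : ℝ}
    (hq : q ∈ lowDegree ι D) (hfq : ∀ x, |f x - q x| ≤ e) :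
    ∑ S with D < S.card, walshCoeff S f ^ 2 ≤ e ^ 2 := by
  calc ∑ S with D < S.card, walshCoeff S f ^ 2
      = ∑ S with D < S.card, walshCoeff S (f - q) ^ 2 := by
        refine Finset.sum_congr rfl fun S hS => ?_
        rw [map_sub, walshCoeff_eq_zero_of_mem_lowDegree hq (Finset.mem_filter.mp hS).2, sub_zero]
    _ ≤ ∑ S, walshCoeff S (f - q) ^ 2 :=
        Finset.sum_le_sum_of_subset_of_nonneg (Finset.filter_subset _ _) fun _ _ _ => sq_nonneg _
    _ = 𝔼 x, (f - q) x ^ 2 := sum_walshCoeff_sq _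
    _ ≤ e ^ 2 := Finset.expect_le Finset.univ_nonempty fun x _ =>
        sq_le_sq' (abs_le.mp (hfq x)).1 (abs_le.mp (hfq x)).2

end LowDegree

section Flag

variable {E : Type*} [NormedAddCommGroup E] [InnerProductSpace ℝ E]
  (K : ℕ → Submodule ℝ E) [∀ j, (K j).HasOrthogonalProjection]

/-- The successive differences of the orthogonal projections onto a sequence `K` of subspaces;
for monotone `K` these are the projections onto the orthogonal complement of `K (j - 1)`
in `K j`. -/
noncomputable def flagDiff : ℕ → E →L[ℝ] E
  | 0 => (K 0).starProjection
  | j + 1 => (K (j + 1)).starProjection - (K j).starProjection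

variable {K}

lemma flagDiff_succ_add_starProjection (j : ℕ) (a : E) :
    flagDiff K (j + 1) a + (K j).starProjection a = (K (j + 1)).starProjection a := by
  simp [flagDiff]

lemma inner_starProjection_of_mem {j : ℕ} (a : E) {w : E} (hw : w ∈ K j) :
    inner ℝ ((K j).starProjection a) w = inner ℝ a w := by
  rw [(K j).inner_starProjection_left_eq_right, Submodule.starProjection_eq_self_iff.mpr hw]

lemma inner_flagDiff_succ_add {j : ℕ} (a : E) {w : E} (hw : w ∈ K (j + 1)) :
    inner ℝ (flagDiff K (j + 1) a) w + inner ℝ ((K j).starProjection a) w = inner ℝ a w := by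
  rw [← inner_add_left, flagDiff_succ_add_starProjection, inner_starProjection_of_mem a hw]

lemma inner_flagDiff_succ_eq_zero (hK : Monotone K) {j : ℕ} (a : E) {w : E} (hw : w ∈ K j) :
    inner ℝ (flagDiff K (j + 1) a) w = 0 := by
  have h := inner_flagDiff_succ_add a (hK j.le_succ hw)
  rwa [inner_starProjection_of_mem a hw, add_eq_right] at h

lemma sum_norm_flagDiff_sq (hK : Monotone K) (n : ℕ) (a : E) :
    ∑ j ∈ Finset.range (n + 1), ‖flagDiff K j a‖ ^ 2 = ‖(K n).starProjection a‖ ^ 2 := by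
  induction n with
  | zero => simp [flagDiff]
  | succ n ih =>
    have pythagoras := norm_add_sq_eq_norm_sq_add_norm_sq_of_inner_eq_zero _ _
      (inner_flagDiff_succ_eq_zero hK a ((K n).starProjection_apply_mem a))
    rw [flagDiff_succ_add_starProjection] at pythagoras
    rw [Finset.sum_range_succ, ih]
    linarith

lemma sum_norm_flagDiff_sq_le (hK : Monotone K) (n : ℕ) (a : E) :
    ∑ j ∈ Finset.range n, ‖flagDiff K j a‖ ^ 2 ≤ ‖a‖ ^ 2 := by
  calc ∑ j ∈ Finset.range n, ‖flagDiff K j a‖ ^ 2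
      ≤ ∑ j ∈ Finset.range (n + 1), ‖flagDiff K j a‖ ^ 2 :=
        Finset.sum_le_sum_of_subset_of_nonneg (Finset.range_mono n.le_succ)
          fun _ _ _ => sq_nonneg _
    _ = ‖(K n).starProjection a‖ ^ 2 := sum_norm_flagDiff_sq hK n a
    _ ≤ ‖a‖ ^ 2 := by gcongr; exact (K n).norm_starProjection_apply_le a

lemma sum_norm_flagDiff_succ_mul_norm_flagDiff_le (hK : Monotone K) (n : ℕ) (a b : E) :
    ∑ j ∈ Finset.range n, ‖flagDiff K (j + 1) a‖ * ‖flagDiff K j b‖ ≤ ‖a‖ * ‖b‖ := by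
  have ha : ∑ j ∈ Finset.range n, ‖flagDiff K (j + 1) a‖ ^ 2 ≤ ‖a‖ ^ 2 := by
    refine le_trans ?_ (sum_norm_flagDiff_sq_le hK (n + 1) a)
    rw [Finset.sum_range_succ']
    exact le_add_of_nonneg_right (sq_nonneg _)
  refine (Real.sum_mul_le_sqrt_mul_sqrt _ _ _).trans ?_
  gcongr
  · exact Real.sqrt_le_iff.mpr ⟨norm_nonneg _, ha⟩
  · exact Real.sqrt_le_iff.mpr ⟨norm_nonneg _, sum_norm_flagDiff_sq_le hK n b⟩

variable {e : E →ₗ[ℝ] E}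

lemma abs_inner_flagDiff_succ_le (hK : Monotone K) (he_step : ∀ j, ∀ a ∈ K j, e a ∈ K (j + 1))
    (he_norm : ∀ a, ‖e a‖ ≤ ‖a‖) (j : ℕ) (a b : E) :
    |inner ℝ (flagDiff K (j + 1) a) (e ((K j).starProjection b))|
      ≤ ‖flagDiff K (j + 1) a‖ * ‖flagDiff K j b‖ := by
  have drop_lower : inner ℝ (flagDiff K (j + 1) a) (e ((K j).starProjection b))
      = inner ℝ (flagDiff K (j + 1) a) (e (flagDiff K j b)) := by
    cases j with
    | zero => rfl
    | succ j =>
      rw [← flagDiff_succ_add_starProjection j b, map_add, inner_add_right,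
        inner_flagDiff_succ_eq_zero hK a (he_step j _ ((K j).starProjection_apply_mem b)),
        add_zero]
  rw [drop_lower]
  refine (abs_real_inner_le_norm _ _).trans ?_
  gcongr
  exact he_norm _

lemma inner_starProjection_eq_sub (he_step : ∀ j, ∀ a ∈ K j, e a ∈ K (j + 1))
    (he_symm : e.IsSymmetric) {a b : E} (ha : e a = a) (hb : e b = 0) (j : ℕ) :
    inner ℝ a ((K j).starProjection b)
      = inner ℝ (flagDiff K (j + 1) a) (e ((K j).starProjection b))
        - inner ℝ (flagDiff K (j + 1) b) (e ((K j).starProjection a)) := by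
  -- The difference is `⟪a, (e P - P e) b⟫`, where `P` is the projection onto `K j`.
  have split_a := inner_flagDiff_succ_add a (he_step j _ ((K j).starProjection_apply_mem b))
  have split_b := inner_flagDiff_succ_add b (he_step j _ ((K j).starProjection_apply_mem a))
  rw [← he_symm a, ha] at split_a
  rw [← he_symm b, hb, inner_zero_left] at split_b
  have lower_symm := he_symm ((K j).starProjection a) ((K j).starProjection b)
  rw [real_inner_comm] at lower_symm
  linarith

lemma abs_sum_inner_starProjection_le (hK : Monotone K)
    (he_step : ∀ j, ∀ a ∈ K j, e a ∈ K (j + 1)) (he_symm : e.IsSymmetric)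
    (he_norm : ∀ a, ‖e a‖ ≤ ‖a‖) {a b : E} (ha : e a = a) (hb : e b = 0) (n : ℕ) :
    |∑ j ∈ Finset.range n, inner ℝ a ((K j).starProjection b)| ≤ 2 * (‖a‖ * ‖b‖) := by
  calc |∑ j ∈ Finset.range n, inner ℝ a ((K j).starProjection b)|
      ≤ ∑ j ∈ Finset.range n, |inner ℝ a ((K j).starProjection b)| :=
        Finset.abs_sum_le_sum_abs _ _
    _ ≤ ∑ j ∈ Finset.range n, (‖flagDiff K (j + 1) a‖ * ‖flagDiff K j b‖
          + ‖flagDiff K (j + 1) b‖ * ‖flagDiff K j a‖) := by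
        refine Finset.sum_le_sum fun j _ => ?_
        rw [inner_starProjection_eq_sub he_step he_symm ha hb]
        exact (abs_sub _ _).trans (add_le_add
          (abs_inner_flagDiff_succ_le hK he_step he_norm j a b)
          (abs_inner_flagDiff_succ_le hK he_step he_norm j b a))
    _ ≤ ‖a‖ * ‖b‖ + ‖b‖ * ‖a‖ := by
        rw [Finset.sum_add_distrib]
        exact add_le_add (sum_norm_flagDiff_succ_mul_norm_flagDiff_le hK n a b)
          (sum_norm_flagDiff_succ_mul_norm_flagDiff_le hK n b a)
    _ = 2 * (‖a‖ * ‖b‖) := by ring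

end Flag

section Rectangle

lemma add_sq_le_add_mul_add {a b s t x y : ℝ} (ha : 0 ≤ a) (hb : 0 ≤ b) (hs : 0 ≤ s)
    (ht : 0 ≤ t) (hx : x ^ 2 ≤ a * s) (hy : y ^ 2 ≤ b * t) :
    (x + y) ^ 2 ≤ (a + b) * (s + t) := by
  simpa using Finset.sum_sq_le_sum_mul_sum_of_sq_le_mul (Finset.univ : Finset (Fin 2))
    (r := ![x, y]) (f := ![a, b]) (g := ![s, t]) (by simp [Fin.forall_fin_two, ha, hb])
    (by simp [Fin.forall_fin_two, hs, ht]) (by simp [Fin.forall_fin_two, hx, hy])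

variable {X : Type*}

/-- The real-valued indicator of a Boolean function. -/
def boolInd (f : X → Bool) (x : X) : ℝ := if f x then 1 else 0

lemma boolInd_and (f g : X → Bool) (x : X) :
    boolInd (fun y => f y && g y) x = boolInd f x * boolInd g x := by
  cases hf : f x <;> simp [boolInd, hf]

lemma boolInd_not (f : X → Bool) (x : X) : boolInd (fun y => !f y) x = 1 - boolInd f x := by
  cases hf : f x <;> simp [boolInd, hf]

lemma abs_boolInd_le_one (f : X → Bool) (x : X) : |boolInd f x| ≤ 1 := by
  cases hf : f x <;> simp [boolInd, hf]

/-- Pointwise multiplication by `g`, as an operator on `ℓ²(X)`. -/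
def pointwiseMul (g : X → ℝ) : EuclideanSpace ℝ X →ₗ[ℝ] EuclideanSpace ℝ X where
  toFun u := WithLp.toLp 2 fun x => g x * u x
  map_add' u v := by ext x; simp [mul_add]
  map_smul' c u := by ext x; simp [mul_left_comm]

@[simp] lemma pointwiseMul_apply (g : X → ℝ) (u : EuclideanSpace ℝ X) (x : X) :
    pointwiseMul g u x = g x * u x := rfl

/-- The orthogonal projection of `ℓ²(X)` onto the vectors supported on `{x | f x}`. -/
def supportProj (f : X → Bool) : EuclideanSpace ℝ X →ₗ[ℝ] EuclideanSpace ℝ X :=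
  pointwiseMul (boolInd f)

lemma supportProj_apply (f : X → Bool) (u : EuclideanSpace ℝ X) (x : X) :
    supportProj f u x = boolInd f x * u x := rfl

lemma supportProj_and (f g : X → Bool) (u : EuclideanSpace ℝ X) :
    supportProj (fun x => f x && g x) u = supportProj g (supportProj f u) := by
  ext x
  simp only [supportProj_apply, boolInd_and]
  ring

lemma supportProj_not (f : X → Bool) (u : EuclideanSpace ℝ X) :
    supportProj (fun x => !f x) u = u - supportProj f u := by
  ext x
  simp only [supportProj_apply, boolInd_not, PiLp.sub_apply]
  ring

lemma supportProj_supportProj (f : X → Bool) (u : EuclideanSpace ℝ X) :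
    supportProj f (supportProj f u) = supportProj f u := by
  rw [← supportProj_and]
  simp only [Bool.and_self]

lemma supportProj_comm (f g : X → Bool) (u : EuclideanSpace ℝ X) :
    supportProj f (supportProj g u) = supportProj g (supportProj f u) := by
  rw [← supportProj_and, ← supportProj_and]
  simp only [Bool.and_comm]

lemma supportProj_sub_supportProj (f : X → Bool) (u : EuclideanSpace ℝ X) :
    supportProj f (u - supportProj f u) = 0 := by
  rw [map_sub, supportProj_supportProj, sub_self]

variable [Fintype X]

lemma inner_eq_sum_mul (u v : EuclideanSpace ℝ X) : inner ℝ u v = ∑ x, u x * v x := by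
  rw [PiLp.inner_apply]
  exact Finset.sum_congr rfl fun x _ => by simp [mul_comm]

lemma pointwiseMul_isSymmetric (g : X → ℝ) : (pointwiseMul g).IsSymmetric := by
  intro u v
  simp only [inner_eq_sum_mul, pointwiseMul_apply]
  exact Finset.sum_congr rfl fun x _ => by ring

lemma norm_pointwiseMul_le {g : X → ℝ} (hg : ∀ x, |g x| ≤ 1) (u : EuclideanSpace ℝ X) :
    ‖pointwiseMul g u‖ ≤ ‖u‖ := by
  simp only [EuclideanSpace.norm_eq, pointwiseMul_apply, norm_mul]
  gcongr with x
  exact mul_le_of_le_one_left (norm_nonneg _) (hg x)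

lemma norm_supportProj_le (f : X → Bool) (u : EuclideanSpace ℝ X) : ‖supportProj f u‖ ≤ ‖u‖ :=
  norm_pointwiseMul_le (abs_boolInd_le_one f) u

lemma norm_supportProj_sq_add (f : X → Bool) (u : EuclideanSpace ℝ X) :
    ‖supportProj f u‖ ^ 2 + ‖u - supportProj f u‖ ^ 2 = ‖u‖ ^ 2 := by
  have orthogonal : inner ℝ (supportProj f u) (u - supportProj f u) = 0 := by
    rw [supportProj, pointwiseMul_isSymmetric, ← supportProj, supportProj_sub_supportProj,
      inner_zero_right]
  have pythagoras := norm_add_sq_eq_norm_sq_add_norm_sq_of_inner_eq_zero _ _ orthogonal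
  rw [add_sub_cancel] at pythagoras
  linarith

/-- The block of the bilinear form `B` with rows in `{x | f x}` and columns in the complement has
norm at most `√c`. -/
def IsRectBounded (B : EuclideanSpace ℝ X →ₗ[ℝ] EuclideanSpace ℝ X →ₗ[ℝ] ℝ) (f : X → Bool)
    (c : ℝ) : Prop :=
  ∀ u w, supportProj f u = u → supportProj f w = 0 → B u w ^ 2 ≤ c * (‖u‖ ^ 2 * ‖w‖ ^ 2)

namespace IsRectBounded

variable {B : EuclideanSpace ℝ X →ₗ[ℝ] EuclideanSpace ℝ X →ₗ[ℝ] ℝ} {f g : X → Bool} {a b : ℝ}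

lemma not (hf : IsRectBounded B f a) : IsRectBounded B.flip (fun x => !f x) a := by
  intro u w hu hw
  rw [supportProj_not, sub_eq_self] at hu
  rw [supportProj_not, sub_eq_zero] at hw
  simpa only [LinearMap.flip_apply, mul_comm] using hf w u hw.symm hu

lemma and (ha : 0 ≤ a) (hb : 0 ≤ b) (hf : IsRectBounded B f a) (hg : IsRectBounded B g b) :
    IsRectBounded B (fun x => f x && g x) (a + b) := by
  intro u w hu hw
  rw [supportProj_and] at hu hw
  have hgu : supportProj g u = u := by rw [← hu, supportProj_supportProj]
  have hfu : supportProj f u = u := by rw [← hu, supportProj_comm, supportProj_supportProj]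
  have bound_f := hf u (w - supportProj f w) hfu (supportProj_sub_supportProj f w)
  have bound_g := hg u (supportProj f w) hgu hw
  have hw_split : B u (w - supportProj f w) + B u (supportProj f w) = B u w := by
    rw [← map_add, sub_add_cancel]
  calc B u w ^ 2
      ≤ (a + b) * (‖u‖ ^ 2 * ‖w - supportProj f w‖ ^ 2 + ‖u‖ ^ 2 * ‖supportProj f w‖ ^ 2) := by
        rw [← hw_split]
        exact add_sq_le_add_mul_add ha hb (by positivity) (by positivity) bound_f bound_g
    _ = (a + b) * (‖u‖ ^ 2 * ‖w‖ ^ 2) := by rw [← norm_supportProj_sq_add f w]; ring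

lemma or (ha : 0 ≤ a) (hb : 0 ≤ b) (hf : IsRectBounded B f a) (hg : IsRectBounded B g b) :
    IsRectBounded B (fun x => f x || g x) (a + b) := by
  simpa using (and ha hb hf.not hg.not).not

lemma eval {ι : Type} [Fintype ι] [DecidableEq ι]
    {B : EuclideanSpace ℝ (ι → Bool) →ₗ[ℝ] EuclideanSpace ℝ (ι → Bool) →ₗ[ℝ] ℝ} {c : ℝ}
    (hc : 0 ≤ c) (hleaf : ∀ i b, IsRectBounded B (DMF.leaf i b).eval c) (φ : DMF ι) :
    IsRectBounded B φ.eval (φ.size * c) := by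
  induction φ with
  | leaf i b => simpa [DMF.size] using hleaf i b
  | and φ ψ hφ hψ =>
    rw [DMF.size, Nat.cast_add, add_mul]
    exact and (by positivity) (by positivity) hφ hψ
  | or φ ψ hφ hψ =>
    rw [DMF.size, Nat.cast_add, add_mul]
    exact or (by positivity) (by positivity) hφ hψ

end IsRectBounded

end Rectangle

section ApproximateDegree

lemma exists_dual_eq_infDist {E : Type*} [SeminormedAddCommGroup E] [NormedSpace ℝ E]
    (W : Submodule ℝ E) (a : E) :
    ∃ g : StrongDual ℝ E, ‖g‖ ≤ 1 ∧ (∀ w ∈ W, g w = 0) ∧ g a = Metric.infDist a W := by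
  obtain ⟨g, hg_norm, hga⟩ := exists_dual_vector'' ℝ (W.mkQ a)
  refine ⟨(g.toLinearMap ∘ₗ W.mkQ).mkContinuous 1 fun b => ?_, ?_, fun w hw => ?_, ?_⟩
  · calc ‖g (W.mkQ b)‖ ≤ ‖g‖ * ‖W.mkQ b‖ := g.le_opNorm _
      _ ≤ 1 * ‖b‖ := by gcongr; exact Submodule.Quotient.norm_mk_le W b
  · exact LinearMap.mkContinuous_norm_le _ zero_le_one _
  · have hw_mk : W.mkQ w = 0 := by simpa using hw
    simp [-Submodule.mkQ_apply, hw_mk]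
  · exact hga.trans (QuotientAddGroup.norm_mk a)

section Duality

variable {X : Type*} [Fintype X]

lemma sum_abs_apply_ite_le_norm [DecidableEq X] (g : StrongDual ℝ (X → ℝ)) :
    ∑ x, |g fun y => if x = y then 1 else 0| ≤ ‖g‖ := by
  set ψ : X → ℝ := fun x => g fun y => if x = y then 1 else 0
  have hg : g (fun x => SignType.sign (ψ x)) = ∑ x, |ψ x| := by
    rw [← ContinuousLinearMap.coe_coe, LinearMap.pi_apply_eq_sum_univ]
    exact Finset.sum_congr rfl fun x _ => sign_mul_self (ψ x)
  have sign_norm : ‖(fun x => (SignType.sign (ψ x) : ℝ))‖ ≤ 1 := by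
    refine (pi_norm_le_iff_of_nonneg zero_le_one).mpr fun x => ?_
    cases SignType.sign (ψ x) <;> simp
  calc ∑ x, |ψ x| ≤ ‖g fun x => (SignType.sign (ψ x) : ℝ)‖ := hg ▸ le_abs_self _
    _ ≤ ‖g‖ := g.unit_le_opNorm _ sign_norm

lemma exists_weight_of_not_approx {W : Submodule ℝ (X → ℝ)} {f : X → ℝ} {e : ℝ}
    (hf : ∀ q ∈ W, ∃ x, e < |f x - q x|) :
    ∃ ψ : X → ℝ, ∑ x, |ψ x| ≤ 1 ∧ (∀ q ∈ W, ∑ x, q x * ψ x = 0) ∧ e ≤ ∑ x, f x * ψ x := by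
  classical
  obtain ⟨g, hg_norm, hgW, hgf⟩ := exists_dual_eq_infDist W f
  have hg_sum (h : X → ℝ) : g h = ∑ x, h x * g fun y => if x = y then 1 else 0 := by
    rw [← ContinuousLinearMap.coe_coe, LinearMap.pi_apply_eq_sum_univ]
    rfl
  refine ⟨_, (sum_abs_apply_ite_le_norm g).trans hg_norm, fun q hq => ?_, ?_⟩
  · rw [← hg_sum, hgW q hq]
  · rw [← hg_sum, hgf]
    refine (Metric.le_infDist W.nonempty).mpr fun q hq => ?_
    obtain ⟨x, hx⟩ := hf q hq
    exact hx.le.trans (dist_le_pi_dist f q x)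

lemma exists_mul_eq_of_sum_abs_le_one {ψ : X → ℝ} (hψ : ∑ x, |ψ x| ≤ 1) :
    ∃ u v : EuclideanSpace ℝ X, ‖u‖ ≤ 1 ∧ ‖v‖ ≤ 1 ∧ ∀ x, u x * v x = ψ x := by
  have norm_le_one {w : EuclideanSpace ℝ X} (hw : ∀ x, w x ^ 2 = |ψ x|) : ‖w‖ ≤ 1 := by
    rw [EuclideanSpace.norm_eq]
    refine Real.sqrt_le_one.mpr ?_
    simpa only [Real.norm_eq_abs, sq_abs, hw] using hψ
  refine ⟨WithLp.toLp 2 fun x => √|ψ x| * SignType.sign (ψ x), WithLp.toLp 2 fun x => √|ψ x|,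
    norm_le_one fun x => ?_, norm_le_one fun x => Real.sq_sqrt (abs_nonneg _), fun x => ?_⟩
  · rcases eq_or_ne (ψ x) 0 with hx | hx
    · simp [hx]
    · have sign_sq : (SignType.sign (ψ x) : ℝ) ^ 2 = 1 := by
        rcases lt_or_gt_of_ne hx with hx | hx <;> simp [hx]
      simp [mul_pow, sign_sq]
  · calc √|ψ x| * SignType.sign (ψ x) * √|ψ x| = SignType.sign (ψ x) * (√|ψ x| * √|ψ x|) := by ring
      _ = ψ x := by rw [Real.mul_self_sqrt (abs_nonneg _), sign_mul_abs]

lemma IsRectBounded.abs_apply_supportProj_le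
    {B : EuclideanSpace ℝ X →ₗ[ℝ] EuclideanSpace ℝ X →ₗ[ℝ] ℝ} {f : X → Bool} {c : ℝ}
    (hf : IsRectBounded B f c) (hB : B.IsSymm) {u v : EuclideanSpace ℝ X}
    (hu : ∀ w, B w u = 0) : |B (supportProj f u) v| ≤ 2 * (√c * (‖u‖ * ‖v‖)) := by
  have block_bound (a b : EuclideanSpace ℝ X) :
      |B (supportProj f a) (b - supportProj f b)| ≤ √c * (‖a‖ * ‖b‖) := by
    have hsq := hf _ _ (supportProj_supportProj f a) (supportProj_sub_supportProj f b)
    have hb : ‖b - supportProj f b‖ ≤ ‖b‖ := by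
      rw [← supportProj_not]
      exact norm_supportProj_le _ b
    rw [← mul_pow] at hsq
    calc |B (supportProj f a) (b - supportProj f b)|
        ≤ √c * (‖supportProj f a‖ * ‖b - supportProj f b‖) := by
          refine (Real.abs_le_sqrt hsq).trans_eq ?_
          rw [Real.sqrt_mul' _ (sq_nonneg _), Real.sqrt_sq (by positivity)]
      _ ≤ √c * (‖a‖ * ‖b‖) := by gcongr; exact norm_supportProj_le f a
  have two_blocks : B (supportProj f u) v
      = B (supportProj f u) (v - supportProj f v) - B (supportProj f v) (u - supportProj f u) := by
    have hsymm : B (supportProj f u) (supportProj f v) = B (supportProj f v) (supportProj f u) :=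
      hB.eq _ _
    rw [map_sub, map_sub, hu, hsymm]
    ring
  rw [two_blocks]
  have huv := block_bound u v
  have hvu := block_bound v u
  rw [mul_comm ‖v‖] at hvu
  linarith [abs_sub (B (supportProj f u) (v - supportProj f v))
    (B (supportProj f v) (u - supportProj f u))]

end Duality

variable {ι : Type*}

/-- The flag of subspaces `v · lowDegree j` of `ℓ²` of the cube. -/
def weightedLowDegree (v : EuclideanSpace ℝ (ι → Bool)) (j : ℕ) :
    Submodule ℝ (EuclideanSpace ℝ (ι → Bool)) :=
  (lowDegree ι j).map (pointwiseMul v ∘ₗ (WithLp.linearEquiv 2 ℝ ((ι → Bool) → ℝ)).symm)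

lemma mem_weightedLowDegree {v a : EuclideanSpace ℝ (ι → Bool)} {j : ℕ} :
    a ∈ weightedLowDegree v j ↔ ∃ q ∈ lowDegree ι j, ∀ x, a x = v x * q x := by
  refine exists_congr fun q => and_congr_right fun _ => ?_
  rw [eq_comm]
  exact ⟨fun h x => by rw [h]; rfl, fun h => by ext x; exact h x⟩

lemma weightedLowDegree_mono (v : EuclideanSpace ℝ (ι → Bool)) :
    Monotone (weightedLowDegree v) := fun _ _ hjk => Submodule.map_mono (lowDegree_mono hjk)

lemma pointwiseMul_mem_weightedLowDegree {v : EuclideanSpace ℝ (ι → Bool)} {g : (ι → Bool) → ℝ}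
    (hg : g ∈ lowDegree ι 1) (j : ℕ) :
    ∀ a ∈ weightedLowDegree v j, pointwiseMul g a ∈ weightedLowDegree v (j + 1) := by
  intro a ha
  obtain ⟨q, hq, haq⟩ := mem_weightedLowDegree.mp ha
  refine mem_weightedLowDegree.mpr ⟨q * g, mul_mem_lowDegree hq hg, fun x => ?_⟩
  rw [pointwiseMul_apply, haq, Pi.mul_apply]
  ring

variable [Fintype ι] [DecidableEq ι]

/-- The bilinear form `⟪u, ∑ j ≤ D, P j w⟫`, where `P j` is the orthogonal projection onto
`weightedLowDegree v j`. -/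
noncomputable def flagForm (v : EuclideanSpace ℝ (ι → Bool)) (D : ℕ) :
    EuclideanSpace ℝ (ι → Bool) →ₗ[ℝ] EuclideanSpace ℝ (ι → Bool) →ₗ[ℝ] ℝ :=
  (innerₗ _).compl₂
    (∑ j ∈ Finset.range (D + 1), (weightedLowDegree v j).starProjection.toLinearMap)

lemma flagForm_apply (v u w : EuclideanSpace ℝ (ι → Bool)) (D : ℕ) : flagForm v D u w
    = ∑ j ∈ Finset.range (D + 1), inner ℝ u ((weightedLowDegree v j).starProjection w) := by
  simp [flagForm]

lemma flagForm_isSymm (v : EuclideanSpace ℝ (ι → Bool)) (D : ℕ) : (flagForm v D).IsSymm := by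
  refine ⟨fun u w => ?_⟩
  simp only [flagForm_apply, RingHom.id_apply]
  refine Finset.sum_congr rfl fun j _ => ?_
  rw [← Submodule.inner_starProjection_left_eq_right, real_inner_comm]

lemma flagForm_self_right (u v : EuclideanSpace ℝ (ι → Bool)) (D : ℕ) :
    flagForm v D u v = (D + 1) * inner ℝ u v := by
  have hv (j : ℕ) : (weightedLowDegree v j).starProjection v = v :=
    Submodule.starProjection_eq_self_iff.mpr
      (mem_weightedLowDegree.mpr ⟨1, one_mem_lowDegree j, fun x => by simp⟩)
  simp [flagForm_apply, hv]

lemma flagForm_eq_zero {u v : EuclideanSpace ℝ (ι → Bool)} {D : ℕ}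
    (huv : ∀ q ∈ lowDegree ι D, ∑ x, q x * (u x * v x) = 0) (w : EuclideanSpace ℝ (ι → Bool)) :
    flagForm v D w u = 0 := by
  rw [flagForm_apply]
  refine Finset.sum_eq_zero fun j hj => ?_
  have hjD : j ≤ D := Nat.lt_succ_iff.mp (Finset.mem_range.mp hj)
  have orthogonal : (weightedLowDegree v j).starProjection u = 0 := by
    rw [Submodule.starProjection_apply_eq_zero_iff, Submodule.mem_orthogonal]
    intro a ha
    obtain ⟨q, hq, haq⟩ := mem_weightedLowDegree.mp ha
    rw [inner_eq_sum_mul, ← huv q (lowDegree_mono hjD hq)]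
    exact Finset.sum_congr rfl fun x _ => by rw [haq]; ring
  rw [orthogonal, inner_zero_right]

lemma isRectBounded_flagForm (v : EuclideanSpace ℝ (ι → Bool)) (D : ℕ) {f : (ι → Bool) → Bool}
    (hf : boolInd f ∈ lowDegree ι 1) : IsRectBounded (flagForm v D) f 4 := by
  intro u w hu hw
  have h := abs_sum_inner_starProjection_le (weightedLowDegree_mono v)
    (pointwiseMul_mem_weightedLowDegree hf) (pointwiseMul_isSymmetric _)
    (norm_pointwiseMul_le (abs_boolInd_le_one f)) hu hw (D + 1)
  rw [← flagForm_apply] at h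
  calc flagForm v D u w ^ 2 ≤ (2 * (‖u‖ * ‖w‖)) ^ 2 := sq_le_sq' (abs_le.mp h).1 (abs_le.mp h).2
    _ = 4 * (‖u‖ ^ 2 * ‖w‖ ^ 2) := by ring

lemma boolInd_leaf_mem_lowDegree {ι : Type} (i : ι) (b : Bool) :
    boolInd (DMF.leaf i b).eval ∈ lowDegree ι 1 := by
  have expansion : boolInd (DMF.leaf i b).eval
      = (1 / 2 : ℝ) • (1 + boolSign b • walsh {i}) := by
    ext x
    cases b <;> cases hx : x i <;> norm_num [boolInd, DMF.eval, walsh, boolSign, hx]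
  rw [expansion]
  exact Submodule.smul_mem _ _ (Submodule.add_mem _ (one_mem_lowDegree 1)
    (Submodule.smul_mem _ _ (walsh_mem_lowDegree (Finset.card_singleton i).le)))

theorem exists_lowDegree_approx {ι : Type} [Finite ι] (φ : DMF ι) {D : ℕ} {e : ℝ}
    (hD : 4 * √φ.size < (D + 1) * e) :
    ∃ q ∈ lowDegree ι D, ∀ x, |boolInd φ.eval x - q x| ≤ e := by
  classical
  have := Fintype.ofFinite ι
  by_contra! h_not_approx
  obtain ⟨ψ, hψ_sum, hψ_orth, hψ_corr⟩ := exists_weight_of_not_approx h_not_approx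
  obtain ⟨u, v, hu, hv, huv⟩ := exists_mul_eq_of_sum_abs_le_one hψ_sum
  simp only [← huv] at hψ_orth hψ_corr
  have rect_bound := (IsRectBounded.eval zero_le_four
    (fun i b => isRectBounded_flagForm v D (boolInd_leaf_mem_lowDegree i b))
    φ).abs_apply_supportProj_le (v := v) (flagForm_isSymm v D) (flagForm_eq_zero hψ_orth)
  have correlation : inner ℝ (supportProj φ.eval u) v = ∑ x, boolInd φ.eval x * (u x * v x) := by
    rw [inner_eq_sum_mul]
    exact Finset.sum_congr rfl fun x _ => by rw [supportProj_apply, mul_assoc]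
  rw [flagForm_self_right, correlation] at rect_bound
  refine absurd hD (not_lt.mpr ?_)
  calc (D + 1) * e ≤ (D + 1) * ∑ x, boolInd φ.eval x * (u x * v x) := by gcongr
    _ ≤ 2 * (√(φ.size * 4) * (‖u‖ * ‖v‖)) := (le_abs_self _).trans rect_bound
    _ ≤ 2 * (√(φ.size * 4) * (1 * 1)) := by gcongr
    _ = 4 * √φ.size := by
        rw [Real.sqrt_mul (Nat.cast_nonneg _), show √4 = 2 by
          rw [show (4 : ℝ) = 2 ^ 2 by norm_num, Real.sqrt_sq zero_le_two]]
        ring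

end ApproximateDegree

section Amplification

open Polynomial

/-- The polynomial `y ↦ P[Bin(2t + 1, y) > t]`: the probability that the majority of `2t + 1`
independent `y`-biased coins is heads. -/
noncomputable def majorityPoly (t : ℕ) : ℝ[X] :=
  ∑ j ∈ Finset.Ioc t (2 * t + 1), bernsteinPolynomial ℝ (2 * t + 1) j

lemma natDegree_majorityPoly_le (t : ℕ) : (majorityPoly t).natDegree ≤ 2 * t + 1 := by
  refine natDegree_sum_le_of_forall_le _ _ fun j hj => ?_
  have hj := (Finset.mem_Ioc.mp hj).2
  rw [bernsteinPolynomial]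
  compute_degree
  omega

lemma eval_one_sub_majorityPoly (t : ℕ) (y : ℝ) :
    (majorityPoly t).eval (1 - y) = 1 - (majorityPoly t).eval y := by
  have reflect : (majorityPoly t).comp (1 - X)
      = ∑ j ∈ Finset.range (t + 1), bernsteinPolynomial ℝ (2 * t + 1) j := by
    rw [majorityPoly, sum_comp]
    refine Finset.sum_nbij' (fun j => 2 * t + 1 - j) (fun j => 2 * t + 1 - j) ?_ ?_ ?_ ?_ ?_
    all_goals intro j hj
    all_goals simp only [Finset.mem_Ioc, Finset.mem_range] at *
    any_goals omega
    exact bernsteinPolynomial.flip _ _ _ hj.2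
  have total : ∑ j ∈ Finset.range (t + 1), bernsteinPolynomial ℝ (2 * t + 1) j + majorityPoly t
      = 1 := by
    have Ioc_eq_Ico : Finset.Ioc t (2 * t + 1) = Finset.Ico (t + 1) (2 * t + 1 + 1) := by
      ext j
      simp only [Finset.mem_Ioc, Finset.mem_Ico]
      omega
    rw [majorityPoly, Ioc_eq_Ico, ← bernsteinPolynomial.sum ℝ (2 * t + 1)]
    exact Finset.sum_range_add_sum_Ico _ (by omega)
  have h := congrArg (eval y) (reflect ▸ total)
  simp only [eval_add, eval_comp, eval_sub, eval_one, eval_X] at h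
  linarith

lemma abs_eval_majorityPoly_le (t : ℕ) {y : ℝ} (hy : |y| ≤ 1 / 16) :
    |(majorityPoly t).eval y| ≤ 2 * (1 / 3) ^ t := by
  have hy' : |1 - y| ≤ 17 / 16 := (abs_sub _ _).trans (by rw [abs_one]; linarith)
  have term_bound {j : ℕ} (hj : j ∈ Finset.Ioc t (2 * t + 1)) :
      |(bernsteinPolynomial ℝ (2 * t + 1) j).eval y| ≤ (2 * t + 1).choose j * (1 / 12) ^ t := by
    have ⟨htj, hjt⟩ := Finset.mem_Ioc.mp hj
    simp only [bernsteinPolynomial, eval_mul, eval_natCast, eval_pow, eval_X, eval_sub, eval_one,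
      abs_mul, abs_pow, Nat.abs_cast, mul_assoc]
    gcongr
    calc |y| ^ j * |1 - y| ^ (2 * t + 1 - j)
        ≤ (1 / 16) ^ j * (17 / 16) ^ (2 * t + 1 - j) := by gcongr
      _ ≤ (1 / 16) ^ t * (17 / 16) ^ t := by
          gcongr ?_ * ?_
          · exact pow_le_pow_of_le_one (by norm_num) (by norm_num) htj.le
          · exact pow_le_pow_right₀ (by norm_num) (by omega)
      _ ≤ (1 / 12) ^ t := by rw [← mul_pow]; gcongr; norm_num
  have sum_choose : ∑ j ∈ Finset.Ioc t (2 * t + 1), ((2 * t + 1).choose j : ℝ) ≤ 2 * 4 ^ t := by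
    have subset_range : Finset.Ioc t (2 * t + 1) ⊆ Finset.range (2 * t + 1 + 1) := fun j hj =>
      Finset.mem_range.mpr (Nat.lt_succ_of_le (Finset.mem_Ioc.mp hj).2)
    have h := (Finset.sum_le_sum_of_subset subset_range).trans_eq (Nat.sum_range_choose (2 * t + 1))
    rw [pow_succ', pow_mul] at h
    exact_mod_cast h
  rw [majorityPoly, eval_finsetSum]
  calc |∑ j ∈ Finset.Ioc t (2 * t + 1), (bernsteinPolynomial ℝ (2 * t + 1) j).eval y|
      ≤ ∑ j ∈ Finset.Ioc t (2 * t + 1), ((2 * t + 1).choose j : ℝ) * (1 / 12) ^ t :=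
        (Finset.abs_sum_le_sum_abs _ _).trans (Finset.sum_le_sum fun j hj => term_bound hj)
    _ ≤ 2 * 4 ^ t * (1 / 12) ^ t := by rw [← Finset.sum_mul]; gcongr
    _ = 2 * (1 / 3) ^ t := by rw [mul_assoc, ← mul_pow]; norm_num

lemma abs_boolInd_sub_eval_majorityPoly_le {X : Type*} (f : X → Bool) (t : ℕ) {x : X} {y : ℝ}
    (hy : |boolInd f x - y| ≤ 1 / 16) :
    |boolInd f x - (majorityPoly t).eval y| ≤ 2 * (1 / 3) ^ t := by
  cases hf : f x <;> simp only [boolInd, hf, if_true, Bool.false_eq_true, if_false] at hy ⊢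
  · rw [zero_sub, abs_neg] at hy ⊢
    exact abs_eval_majorityPoly_le t hy
  · rw [← eval_one_sub_majorityPoly]
    exact abs_eval_majorityPoly_le t hy

end Amplification

section FourierTail

lemma DMF.size_pos {ι : Type} (φ : DMF ι) : 0 < φ.size := by
  induction φ with
  | leaf => exact Nat.one_pos
  | and φ ψ hφ _ => exact Nat.add_pos_left hφ _
  | or φ ψ hφ _ => exact Nat.add_pos_left hφ _

lemma DMF.one_le_sqrt_size {ι : Type} (φ : DMF ι) : 1 ≤ √(φ.size : ℝ) :=
  Real.one_le_sqrt.mpr (Nat.one_le_cast.mpr φ.size_pos)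

variable {ι : Type} [Fintype ι] [DecidableEq ι]

lemma sum_walshCoeff_boolInd_sq_le_one {ι : Type*} [Fintype ι] [DecidableEq ι]
    (f : (ι → Bool) → Bool) : ∑ S, walshCoeff S (boolInd f) ^ 2 ≤ 1 := by
  rw [sum_walshCoeff_sq]
  exact Finset.expect_le Finset.univ_nonempty fun x _ =>
    (sq_le_one_iff_abs_le_one _).mpr (abs_boolInd_le_one f x)

lemma sum_walshCoeff_sq_tail_le (φ : DMF ι) {D : ℕ} (hD : 64 * √φ.size < D + 1) (t : ℕ) :
    ∑ S with t * (4 * D) ≤ S.card, walshCoeff S (boolInd φ.eval) ^ 2 ≤ 4 * (1 / 9) ^ t := by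
  rcases t.eq_zero_or_pos with rfl | ht
  · simpa using (sum_walshCoeff_boolInd_sq_le_one φ.eval).trans (by norm_num)
  have hD_pos : 0 < D := by
    have h : (0 : ℝ) < D := by linarith [φ.one_le_sqrt_size]
    exact_mod_cast h
  obtain ⟨q, hq, hq_approx⟩ := exists_lowDegree_approx φ (D := D) (e := 1 / 16) (by linarith)
  have approx (x : ι → Bool) :
      |boolInd φ.eval x - Polynomial.aeval q (majorityPoly t) x| ≤ 2 * (1 / 3) ^ t := by
    have aeval_apply : Polynomial.aeval q (majorityPoly t) x = (majorityPoly t).eval (q x) := by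
      rw [Polynomial.aeval_fn_apply]; rfl
    rw [aeval_apply]
    exact abs_boolInd_sub_eval_majorityPoly_le _ t (hq_approx x)
  calc ∑ S with t * (4 * D) ≤ S.card, walshCoeff S (boolInd φ.eval) ^ 2
      ≤ ∑ S with (2 * t + 1) * D < S.card, walshCoeff S (boolInd φ.eval) ^ 2 := by
        refine Finset.sum_le_sum_of_subset_of_nonneg (fun S hS => ?_) fun _ _ _ => sq_nonneg _
        simp only [Finset.mem_filter, Finset.mem_univ, true_and] at hS ⊢
        nlinarith
    _ ≤ (2 * (1 / 3) ^ t) ^ 2 := sum_walshCoeff_sq_le_of_approx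
        (aeval_mem_lowDegree hq (natDegree_majorityPoly_le t)) approx
    _ = 4 * (1 / 9) ^ t := by rw [mul_pow, ← pow_mul, mul_comm t, pow_mul]; norm_num

lemma sum_mul_exp_le_of_geometric_tail {α : Type*} [Fintype α] {w : α → ℝ} {r : α → ℕ} {m : ℕ}
    {A : ℝ} (hw : ∀ i, 0 ≤ w i)
    (htail : ∀ t, ∑ i with t * m ≤ r i, w i ≤ A * (1 / 9) ^ t) :
    ∑ i, w i * Real.exp (r i / m) ≤ 9 / 2 * A := by
  have hA : 0 ≤ A := by simpa using (Finset.sum_nonneg fun i _ => hw i).trans (htail 0)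
  have exp_le (i : α) : Real.exp (r i / m) ≤ 3 * 3 ^ (r i / m) := by
    have quotient_lt : (r i / m : ℝ) ≤ (r i / m : ℕ) + 1 := by
      rw [← Nat.floor_div_eq_div (K := ℝ)]
      exact (Nat.lt_floor_add_one _).le
    calc Real.exp (r i / m) ≤ Real.exp ((r i / m : ℕ) + 1) := Real.exp_le_exp.mpr quotient_lt
      _ = Real.exp 1 * Real.exp 1 ^ (r i / m) := by
        rw [Real.exp_add, ← Real.exp_nat_mul, mul_one, mul_comm]
      _ ≤ 3 * 3 ^ (r i / m) := by gcongr <;> exact Real.exp_one_lt_three.le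
  set N := Finset.univ.sup r + 1
  have pow_le (i : α) : (3 : ℝ) ^ (r i / m) ≤ ∑ t ∈ Finset.range N with t * m ≤ r i, 3 ^ t := by
    refine Finset.single_le_sum (f := fun t => (3 : ℝ) ^ t) (fun _ _ => by positivity) ?_
    refine Finset.mem_filter.mpr ⟨Finset.mem_range.mpr ?_, Nat.div_mul_le_self _ _⟩
    exact Nat.lt_succ_of_le ((Nat.div_le_self _ _).trans (Finset.le_sup (Finset.mem_univ i)))
  calc ∑ i, w i * Real.exp (r i / m)
      ≤ ∑ i, w i * (3 * ∑ t ∈ Finset.range N with t * m ≤ r i, 3 ^ t) := by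
        refine Finset.sum_le_sum fun i _ => mul_le_mul_of_nonneg_left ?_ (hw i)
        exact (exp_le i).trans (mul_le_mul_of_nonneg_left (pow_le i) zero_le_three)
    _ = 3 * ∑ t ∈ Finset.range N, 3 ^ t * ∑ i with t * m ≤ r i, w i := by
        simp only [Finset.sum_filter, Finset.mul_sum]
        rw [Finset.sum_comm]
        refine Finset.sum_congr rfl fun t _ => Finset.sum_congr rfl fun i _ => ?_
        split_ifs <;> ring
    _ ≤ 3 * ∑ t ∈ Finset.range N, 3 ^ t * (A * (1 / 9) ^ t) := by gcongr; exact htail _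
    _ = 3 * A * ∑ t ∈ Finset.range N, (1 / 3) ^ t := by
        simp only [Finset.mul_sum]
        refine Finset.sum_congr rfl fun t _ => ?_
        rw [show (1 / 3 : ℝ) = 3 * (1 / 9) by norm_num, mul_pow]
        ring
    _ ≤ 3 * A * (1 - 1 / 3)⁻¹ := by
        gcongr
        rw [← tsum_geometric_of_lt_one (by norm_num) (by norm_num)]
        exact (summable_geometric_of_lt_one (by norm_num) (by norm_num)).sum_le_tsum _
          fun _ _ => by positivity
    _ = 9 / 2 * A := by norm_num; ring

theorem sum_walshCoeff_sq_mul_exp_le (φ : DMF ι) :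
    ∑ S, walshCoeff S (boolInd φ.eval) ^ 2 * Real.exp (S.card / (256 * √φ.size)) ≤ 18 := by
  set D := ⌊64 * √φ.size⌋₊
  have hD_pos : (0 : ℝ) < (4 * D : ℕ) := Nat.cast_pos.mpr <|
    Nat.mul_pos zero_lt_four (Nat.floor_pos.mpr (by linarith [φ.one_le_sqrt_size]))
  have hD_le : (D : ℝ) ≤ 64 * √φ.size := Nat.floor_le (by positivity)
  calc ∑ S, walshCoeff S (boolInd φ.eval) ^ 2 * Real.exp (S.card / (256 * √φ.size))
      ≤ ∑ S, walshCoeff S (boolInd φ.eval) ^ 2 * Real.exp (S.card / (4 * D : ℕ)) := by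
        gcongr
        push_cast
        linarith
    _ ≤ 9 / 2 * 4 := sum_mul_exp_le_of_geometric_tail (fun _ => sq_nonneg _)
        (sum_walshCoeff_sq_tail_le φ (Nat.lt_floor_add_one _))
    _ = 18 := by norm_num

end FourierTail

section DiscreteDerivative

variable {ι : Type*} [DecidableEq ι]

/-- The point of the cube obtained from `x` by negating the coordinates in `V`. -/
def flipOn (V : Finset ι) (x : ι → Bool) (i : ι) : Bool := if i ∈ V then !x i else x i

lemma flipOn_involutive (V : Finset ι) : Function.Involutive (flipOn V) := fun x => by
  ext i
  by_cases hi : i ∈ V <;> simp [flipOn, hi]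

lemma walsh_flipOn (T V : Finset ι) (x : ι → Bool) :
    walsh T (flipOn V x) = (∏ i ∈ V, if i ∈ T then -1 else 1) * walsh T x := by
  have sign_flip (i : ι) :
      boolSign (flipOn V x i) = (if i ∈ V then -1 else 1) * boolSign (x i) := by
    by_cases hi : i ∈ V <;> cases hx : x i <;> simp [flipOn, boolSign, hi, hx]
  have signs_comm : ∏ i ∈ T, (if i ∈ V then -1 else 1 : ℝ) = ∏ i ∈ V, if i ∈ T then -1 else 1 := by
    rw [Finset.prod_ite_mem, Finset.inter_comm, ← Finset.prod_ite_mem]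
  simp only [walsh, sign_flip, Finset.prod_mul_distrib, signs_comm]

/-- The iterated discrete derivative `∏ i ∈ U, (1 - F i)` applied to `g`, where `F i` negates the
`i`-th coordinate of the argument. -/
noncomputable def discreteDeriv (U : Finset ι) (g : (ι → Bool) → ℝ) (x : ι → Bool) : ℝ :=
  ∑ V ∈ U.powerset, (-1) ^ V.card * g (flipOn V x)

lemma discreteDeriv_boolInd_eq_intCast (U : Finset ι) (f : (ι → Bool) → Bool) (x : ι → Bool) :
    ∃ m : ℤ, discreteDeriv U (boolInd f) x = m :=
  ⟨∑ V ∈ U.powerset, (-1) ^ V.card * if f (flipOn V x) then 1 else 0, by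
    simp [discreteDeriv, boolInd]⟩

variable [Fintype ι]

lemma walshCoeff_comp_flipOn (T V : Finset ι) (g : (ι → Bool) → ℝ) :
    walshCoeff T (fun x => g (flipOn V x))
      = (∏ i ∈ V, if i ∈ T then -1 else 1) * walshCoeff T g := by
  simp only [walshCoeff_apply, Finset.mul_expect]
  refine Fintype.expect_equiv (flipOn_involutive V).toPerm _ _ fun x => ?_
  have hx : walsh T x = (∏ i ∈ V, if i ∈ T then -1 else 1) * walsh T (flipOn V x) := by
    rw [← walsh_flipOn, flipOn_involutive]
  rw [hx, Function.Involutive.coe_toPerm]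
  ring

lemma walshCoeff_discreteDeriv (T U : Finset ι) (g : (ι → Bool) → ℝ) :
    walshCoeff T (discreteDeriv U g) = if U ⊆ T then 2 ^ U.card * walshCoeff T g else 0 := by
  have expansion : discreteDeriv U g
      = ∑ V ∈ U.powerset, (-1 : ℝ) ^ V.card • fun x => g (flipOn V x) := by
    ext x
    simp [discreteDeriv]
  have sign_sum : ∑ V ∈ U.powerset, (-1) ^ V.card * ∏ i ∈ V, (if i ∈ T then -1 else 1 : ℝ)
      = if U ⊆ T then 2 ^ U.card else 0 := by
    simp only [← Finset.prod_const, ← Finset.prod_mul_distrib]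
    rw [← Finset.prod_one_add]
    split_ifs with hUT
    · refine Finset.prod_congr rfl fun i hi => ?_
      rw [if_pos (hUT hi)]
      norm_num
    · obtain ⟨i, hiU, hiT⟩ := Finset.not_subset.mp hUT
      exact Finset.prod_eq_zero hiU (by rw [if_neg hiT]; norm_num)
  rw [expansion, map_sum]
  simp only [map_smul, smul_eq_mul, walshCoeff_comp_flipOn, ← mul_assoc, ← Finset.sum_mul]
  rw [sign_sum, ite_mul, zero_mul]

lemma expect_discreteDeriv_sq (U : Finset ι) (g : (ι → Bool) → ℝ) :
    𝔼 x, discreteDeriv U g x ^ 2 = 4 ^ U.card * ∑ T with U ⊆ T, walshCoeff T g ^ 2 := by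
  rw [← sum_walshCoeff_sq, Finset.sum_filter, Finset.mul_sum]
  refine Finset.sum_congr rfl fun T _ => ?_
  rw [walshCoeff_discreteDeriv]
  split_ifs
  · rw [mul_pow, ← pow_mul, mul_comm U.card, pow_mul]
    norm_num
  · simp

/-- `U` is an inclusion-maximal set of coordinates in the Walsh support of the Boolean
function `f`. -/
def IsMaximalMonomial (f : (ι → Bool) → Bool) (U : Finset ι) : Prop :=
  Maximal (fun S => walshCoeff S (boolInd f) ≠ 0) U

lemma IsMaximalMonomial.discreteDeriv_eq {f : (ι → Bool) → Bool} {U : Finset ι}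
    (hU : IsMaximalMonomial f U) (x : ι → Bool) :
    discreteDeriv U (boolInd f) x = 2 ^ U.card * walshCoeff U (boolInd f) * walsh U x := by
  rw [← sum_walshCoeff_mul_walsh (discreteDeriv U (boolInd f)), Finset.sum_eq_single U]
  · rw [walshCoeff_discreteDeriv, if_pos subset_rfl]
  · intro T _ hTU
    rw [walshCoeff_discreteDeriv]
    split_ifs with hUT
    · have hT : walshCoeff T (boolInd f) = 0 :=
        not_not.mp fun hT => hTU (hU.eq_of_ge hT hUT)
      rw [hT, mul_zero, zero_mul]
    · exact zero_mul _
  · exact fun hU => absurd (Finset.mem_univ U) hU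

-- At a maximal monomial the derivative is an integer and, up to sign, a nonzero constant.
lemma IsMaximalMonomial.one_le_discreteDeriv_sq {f : (ι → Bool) → Bool} {U : Finset ι}
    (hU : IsMaximalMonomial f U) (x : ι → Bool) : 1 ≤ discreteDeriv U (boolInd f) x ^ 2 := by
  have ne_zero : discreteDeriv U (boolInd f) x ≠ 0 := by
    rw [hU.discreteDeriv_eq]
    exact mul_ne_zero (mul_ne_zero (by positivity) hU.prop)
      (left_ne_zero_of_mul_eq_one (walsh_mul_self U x))
  obtain ⟨m, hm⟩ := discreteDeriv_boolInd_eq_intCast U f x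
  rw [hm] at ne_zero ⊢
  have hm_sq : 1 ≤ m ^ 2 :=
    (one_le_sq_iff_one_le_abs m).mpr (Int.one_le_abs (Int.cast_ne_zero.mp ne_zero))
  exact_mod_cast hm_sq

lemma IsMaximalMonomial.one_le_four_pow_mul_walshCoeff_sq {f : (ι → Bool) → Bool} {U : Finset ι}
    (hU : IsMaximalMonomial f U) : 1 ≤ 4 ^ U.card * walshCoeff U (boolInd f) ^ 2 := by
  calc 1 ≤ discreteDeriv U (boolInd f) (fun _ => false) ^ 2 := hU.one_le_discreteDeriv_sq _
    _ = (2 ^ U.card) ^ 2 * walshCoeff U (boolInd f) ^ 2 := by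
      rw [hU.discreteDeriv_eq]
      linear_combination
        (2 ^ U.card * walshCoeff U (boolInd f)) ^ 2 * walsh_mul_self U fun _ => false
    _ = 4 ^ U.card * walshCoeff U (boolInd f) ^ 2 := by
      rw [← pow_mul, mul_comm U.card, pow_mul]
      norm_num

end DiscreteDerivative

section RandomRestriction

variable {ι : Type*}

/-- The point of the cube obtained by overwriting `x` with the values fixed by the
restriction `ρ`. -/
def fill (ρ : ι → Option Bool) (x : ι → Bool) (i : ι) : Bool := (ρ i).getD (x i)

lemma rWeight_nonneg {p : ℝ} (hp : p ∈ Set.Icc 0 1) (o : Option Bool) : 0 ≤ rWeight p o := by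
  cases o with
  | none => exact hp.1
  | some _ => exact div_nonneg (sub_nonneg.mpr hp.2) zero_le_two

lemma sum_pow_card_powerset_le {x y : ℝ} (hx : 0 ≤ x) (hy : 0 < y) (hxy : x ≤ y) (d : ℕ)
    (S : Finset ι) :
    ∑ U ∈ S.powerset with d ≤ U.card, x ^ U.card ≤ (x / y) ^ d * Real.exp (y * S.card) := by
  calc ∑ U ∈ S.powerset with d ≤ U.card, x ^ U.card
      ≤ ∑ U ∈ S.powerset with d ≤ U.card, (x / y) ^ d * y ^ U.card := by
        refine Finset.sum_le_sum fun U hU => ?_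
        rw [← div_mul_cancel₀ x hy.ne', mul_pow, mul_div_cancel_right₀ _ hy.ne']
        gcongr ?_ * _
        exact pow_le_pow_of_le_one (by positivity) ((div_le_one hy).mpr hxy)
          (Finset.mem_filter.mp hU).2
    _ ≤ ∑ U ∈ S.powerset, (x / y) ^ d * y ^ U.card :=
        Finset.sum_le_sum_of_subset_of_nonneg (Finset.filter_subset _ _)
          fun _ _ _ => by positivity
    _ = (x / y) ^ d * (y + 1) ^ S.card := by
        rw [← Finset.mul_sum, ← Finset.sum_pow_mul_eq_add_pow]
        simp only [one_pow, mul_one]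
    _ ≤ (x / y) ^ d * Real.exp (y * S.card) := by
        rw [mul_comm y, Real.exp_nat_mul]
        gcongr
        exact Real.add_one_le_exp y

variable [DecidableEq ι]

lemma discreteDeriv_comp_fill {U : Finset ι} {ρ : ι → Option Bool} (hU : ∀ i ∈ U, ρ i = none)
    (g : (ι → Bool) → ℝ) (x : ι → Bool) :
    discreteDeriv U (g ∘ fill ρ) x = discreteDeriv U g (fill ρ x) := by
  refine Finset.sum_congr rfl fun V hV => ?_
  have fill_flip : fill ρ (flipOn V x) = flipOn V (fill ρ x) := by
    ext i
    by_cases hi : i ∈ V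
    · simp [fill, flipOn, hi, hU i (Finset.mem_powerset.mp hV hi)]
    · simp [fill, flipOn, hi]
  rw [Function.comp_apply, fill_flip]

variable [Fintype ι]

/-- The expectation of `F ρ` over a random restriction `ρ` drawn from `R_p`. -/
noncomputable def restrictionExpect (p : ℝ) (F : (ι → Option Bool) → ℝ) : ℝ :=
  ∑ ρ, (∏ i, rWeight p (ρ i)) * F ρ

open Classical in
/-- The probability of the event `E` over a random restriction drawn from `R_p`. -/
noncomputable def restrictionProb (p : ℝ) (E : (ι → Option Bool) → Prop) : ℝ :=
  restrictionExpect p fun ρ => if E ρ then 1 else 0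

lemma restrictionProb_eq_sum (p : ℝ) (E : (ι → Option Bool) → Prop) [DecidablePred E] :
    restrictionProb p E = ∑ ρ, (∏ i, rWeight p (ρ i)) * if E ρ then 1 else 0 := by
  simp only [restrictionProb, restrictionExpect]
  congr!

lemma restrictionExpect_mono {p : ℝ} (hp : p ∈ Set.Icc 0 1) {F G : (ι → Option Bool) → ℝ}
    (hFG : ∀ ρ, F ρ ≤ G ρ) : restrictionExpect p F ≤ restrictionExpect p G :=
  Finset.sum_le_sum fun ρ _ => mul_le_mul_of_nonneg_left (hFG ρ)
    (Finset.prod_nonneg fun _ _ => rWeight_nonneg hp _)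

lemma restrictionExpect_sum {κ : Type*} (p : ℝ) (s : Finset κ)
    (F : κ → (ι → Option Bool) → ℝ) :
    restrictionExpect p (fun ρ => ∑ j ∈ s, F j ρ) = ∑ j ∈ s, restrictionExpect p (F j) := by
  simp only [restrictionExpect, Finset.mul_sum]
  exact Finset.sum_comm

lemma restrictionExpect_one (p : ℝ) : restrictionExpect p (fun _ : ι → Option Bool => 1) = 1 := by
  simp only [restrictionExpect, mul_one]
  rw [← Fintype.prod_sum fun (_ : ι) o => rWeight p o]
  refine Finset.prod_eq_one fun i _ => ?_
  simp only [Fintype.sum_option, Fintype.sum_bool, rWeight]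
  ring

lemma restrictionProb_mono {p : ℝ} (hp : p ∈ Set.Icc 0 1) {E E' : (ι → Option Bool) → Prop}
    (hE : ∀ ρ, E ρ → E' ρ) : restrictionProb p E ≤ restrictionProb p E' := by
  refine restrictionExpect_mono hp fun ρ => ?_
  split_ifs with h h'
  exacts [le_rfl, absurd (hE ρ h) h', zero_le_one, le_rfl]

lemma restrictionProb_le_one {p : ℝ} (hp : p ∈ Set.Icc 0 1) (E : (ι → Option Bool) → Prop) :
    restrictionProb p E ≤ 1 := by
  refine (restrictionExpect_mono hp fun ρ => ?_).trans_eq (restrictionExpect_one p)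
  split_ifs
  exacts [le_rfl, zero_le_one]

lemma restrictionProb_not (p : ℝ) (E : (ι → Option Bool) → Prop) :
    restrictionProb p (fun ρ => ¬E ρ) = 1 - restrictionProb p E := by
  rw [← restrictionExpect_one (ι := ι) p, restrictionProb, restrictionProb, restrictionExpect,
    restrictionExpect, restrictionExpect, ← Finset.sum_sub_distrib]
  refine Finset.sum_congr rfl fun ρ _ => ?_
  by_cases h : E ρ <;> simp [h]

lemma restrictionProb_exists_le {κ : Type*} {p : ℝ} (hp : p ∈ Set.Icc 0 1)
    (s : Finset κ) (E : κ → (ι → Option Bool) → Prop) :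
    restrictionProb p (fun ρ => ∃ j ∈ s, E j ρ) ≤ ∑ j ∈ s, restrictionProb p (E j) := by
  classical
  simp only [restrictionProb, ← restrictionExpect_sum]
  refine restrictionExpect_mono hp fun ρ => ?_
  split_ifs with h
  · obtain ⟨j, hj, hEj⟩ := h
    have h_single := Finset.single_le_sum (f := fun j => if E j ρ then (1 : ℝ) else 0)
      (fun j _ => by positivity) hj
    simpa only [if_pos hEj] using h_single
  · exact Finset.sum_nonneg fun j _ => by positivity

lemma restrictionProb_or_le {p : ℝ} (hp : p ∈ Set.Icc 0 1) (E E' : (ι → Option Bool) → Prop) :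
    restrictionProb p (fun ρ => E ρ ∨ E' ρ) ≤ restrictionProb p E + restrictionProb p E' := by
  simpa [or_comm, add_comm] using
    restrictionProb_exists_le hp Finset.univ fun b => bif b then E else E'

lemma sum_rWeight_mul_free_mul_fill (p : ℝ) (U : Finset ι) (z : ι → Bool) :
    ∑ ρ : ι → Option Bool, ∑ x, (∏ i, rWeight p (ρ i)) *
      ((if ∀ i ∈ U, ρ i = none then 1 else 0) * if fill ρ x = z then 1 else 0) = p ^ U.card := by
  have coordinate (i : ι) :
      ∑ o, ∑ b, rWeight p o *
          ((if i ∈ U → o = none then 1 else 0) * if o.getD b = z i then 1 else 0)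
        = if i ∈ U then p else 1 := by
    by_cases hi : i ∈ U <;> cases z i <;>
      simp [Fintype.sum_option, hi, rWeight]
  calc _ = ∏ i, ∑ o, ∑ b, rWeight p o *
          ((if i ∈ U → o = none then 1 else 0) * if o.getD b = z i then 1 else 0) := by
        simp only [Fintype.prod_sum, Finset.prod_mul_distrib, Finset.prod_ite_zero,
          Finset.prod_const_one, Finset.mem_univ, true_imp_iff, fill, funext_iff]
    _ = p ^ U.card := by
        simp only [coordinate, Finset.prod_ite_mem, Finset.univ_inter, Finset.prod_const]

-- Given that the coordinates in `U` are free, `fill ρ x` is uniform on the cube.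
lemma restrictionExpect_free_mul_expect_fill (p : ℝ) (U : Finset ι) (F : (ι → Bool) → ℝ) :
    restrictionExpect p (fun ρ => (if ∀ i ∈ U, ρ i = none then 1 else 0) * 𝔼 x, F (fill ρ x))
      = p ^ U.card * 𝔼 z, F z := by
  have expand (y : ι → Bool) : F y = ∑ z, F z * if y = z then 1 else 0 := by simp
  calc _ = 𝔼 z, F z * ∑ ρ : ι → Option Bool, ∑ x, (∏ i, rWeight p (ρ i)) *
        ((if ∀ i ∈ U, ρ i = none then 1 else 0) * if fill ρ x = z then 1 else 0) := by
        simp only [restrictionExpect, Fintype.expect_eq_sum_div_card, Finset.mul_sum,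
          Finset.sum_div]
        rw [eq_comm, Finset.sum_comm]
        refine Finset.sum_congr rfl fun ρ _ => ?_
        rw [Finset.sum_comm]
        refine Finset.sum_congr rfl fun x _ => ?_
        rw [expand (fill ρ x), Finset.sum_div, Finset.mul_sum, Finset.mul_sum]
        exact Finset.sum_congr rfl fun z _ => by ring
    _ = p ^ U.card * 𝔼 z, F z := by
        simp only [sum_rWeight_mul_free_mul_fill, mul_comm (F _), Finset.mul_expect]

lemma eq_none_of_walshCoeff_comp_fill_ne_zero {f : (ι → Bool) → Bool} {ρ : ι → Option Bool}
    {U : Finset ι} (hU : walshCoeff U (boolInd (f ∘ fill ρ)) ≠ 0) : ∀ i ∈ U, ρ i = none := by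
  intro i hi
  by_contra h_fixed
  have flip_invariant : (fun x => boolInd (f ∘ fill ρ) (flipOn {i} x)) = boolInd (f ∘ fill ρ) := by
    ext x
    have fill_flip : fill ρ (flipOn {i} x) = fill ρ x := by
      ext j
      rcases eq_or_ne j i with rfl | hji
      · obtain ⟨b, hb⟩ := Option.ne_none_iff_exists'.mp h_fixed
        simp only [fill, hb, Option.getD_some]
      · simp [fill, flipOn, hji]
    simp only [boolInd, Function.comp_apply, fill_flip]
  have negated := walshCoeff_comp_flipOn U {i} (boolInd (f ∘ fill ρ))
  rw [flip_invariant, Finset.prod_singleton, if_pos hi] at negated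
  exact hU (by linarith)

lemma restrictionProb_isMaximalMonomial_le {p : ℝ} (hp : p ∈ Set.Icc 0 1) (f : (ι → Bool) → Bool)
    (U : Finset ι) :
    restrictionProb p (fun ρ => IsMaximalMonomial (f ∘ fill ρ) U)
      ≤ (4 * p) ^ U.card * ∑ S with U ⊆ S, walshCoeff S (boolInd f) ^ 2 := by
  rw [mul_pow, mul_comm (4 ^ _), mul_assoc, ← expect_discreteDeriv_sq,
    ← restrictionExpect_free_mul_expect_fill]
  refine restrictionExpect_mono hp fun ρ => ?_
  split_ifs with h_max h_free h_free
  · rw [one_mul]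
    refine Finset.le_expect Finset.univ_nonempty fun x _ => ?_
    rw [← discreteDeriv_comp_fill h_free]
    exact h_max.one_le_discreteDeriv_sq x
  · exact absurd (eq_none_of_walshCoeff_comp_fill_ne_zero h_max.prop) h_free
  · exact mul_nonneg zero_le_one (Finset.expect_nonneg fun _ _ => sq_nonneg _)
  · rw [zero_mul]

theorem restrictionProb_exists_large_isMaximalMonomial_le {ι : Type} [Fintype ι] [DecidableEq ι]
    {p : ℝ} (hp : p ∈ Set.Icc 0 1) (φ : DMF ι) (d : ℕ) :
    restrictionProb p (fun ρ => ∃ U, d ≤ U.card ∧ IsMaximalMonomial (φ.eval ∘ fill ρ) U)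
      ≤ 18 * (1024 * p * √φ.size) ^ d := by
  set y : ℝ := 1 / (256 * √φ.size) with hy_def
  have hy : 0 < y := one_div_pos.mpr (by linarith [φ.one_le_sqrt_size])
  have ratio : 4 * p / y = 1024 * p * √φ.size := by rw [hy_def]; field_simp; ring
  rcases lt_or_ge y (4 * p) with hpy | hpy
  · have one_le_ratio : 1 ≤ 4 * p / y := (one_le_div hy).mpr hpy.le
    rw [← ratio]
    linarith [restrictionProb_le_one hp fun ρ =>
      ∃ U, d ≤ U.card ∧ IsMaximalMonomial (φ.eval ∘ fill ρ) U, one_le_pow₀ one_le_ratio (n := d)]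
  set c : Finset ι → ℝ := fun S => walshCoeff S (boolInd φ.eval) ^ 2
  calc restrictionProb p (fun ρ => ∃ U, d ≤ U.card ∧ IsMaximalMonomial (φ.eval ∘ fill ρ) U)
      ≤ ∑ U with d ≤ U.card, restrictionProb p fun ρ => IsMaximalMonomial (φ.eval ∘ fill ρ) U := by
        refine le_trans (restrictionProb_mono hp ?_) (restrictionProb_exists_le hp _ _)
        exact fun ρ ⟨U, hdU, hU⟩ => ⟨U, by simpa using hdU, hU⟩
    _ ≤ ∑ U with d ≤ U.card, (4 * p) ^ U.card * ∑ S with U ⊆ S, c S :=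
        Finset.sum_le_sum fun U _ => restrictionProb_isMaximalMonomial_le hp _ U
    _ = ∑ S, c S * ∑ U ∈ S.powerset with d ≤ U.card, (4 * p) ^ U.card := by
        simp only [Finset.mul_sum]
        rw [Finset.sum_comm' (t' := Finset.univ)
          (s' := fun S => S.powerset.filter fun U => d ≤ U.card) (by simp [and_comm])]
        simp only [mul_comm]
    _ ≤ ∑ S, c S * ((4 * p / y) ^ d * Real.exp (y * S.card)) := by
        gcongr with S
        exact sum_pow_card_powerset_le (mul_nonneg zero_le_four hp.1) hy hpy d S
    _ = (4 * p / y) ^ d * ∑ S, c S * Real.exp (S.card / (256 * √φ.size)) := by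
        rw [Finset.mul_sum]
        refine Finset.sum_congr rfl fun S _ => ?_
        rw [hy_def, one_div_mul_eq_div]
        ring
    _ ≤ (4 * p / y) ^ d * 18 := by
        have hp0 := hp.1
        gcongr
        exact sum_walshCoeff_sq_mul_exp_le φ
    _ = 18 * (1024 * p * √φ.size) ^ d := by rw [ratio, mul_comm]

end RandomRestriction

section FormulaComplexity

/-- The two binary gates of De Morgan formulas. -/
def IsGate (op : Bool → Bool → Bool) : Prop := op = and ∨ op = or

lemma IsGate.comm {op : Bool → Bool → Bool} (hop : IsGate op) (a b : Bool) :
    op a b = op b a := by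
  rcases hop with rfl | rfl
  exacts [Bool.and_comm a b, Bool.or_comm a b]

lemma IsGate.monotone {op : Bool → Bool → Bool} (hop : IsGate op) (a : Bool) :
    Monotone (op a) := by
  rcases hop with rfl | rfl <;> cases a <;> decide

lemma IsGate.const_or_id {op : Bool → Bool → Bool} (hop : IsGate op) (c : Bool) :
    (∀ b, op c b = c) ∨ ∀ b, op c b = b := by
  rcases hop with rfl | rfl <;> cases c <;> decide

variable {ι : Type}

/-- The function `h` is constant or computed by a De Morgan formula of size at most `s`. When `ι`
is finite this says `Lc h ≤ s`; see `Lc_le_iff`. -/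
def HasFormula (h : (ι → Bool) → Bool) (s : ℕ) : Prop :=
  (∃ c, ∀ x, h x = c) ∨ ∃ φ : DMF ι, φ.size ≤ s ∧ ∀ x, φ.eval x = h x

lemma HasFormula.mono {h : (ι → Bool) → Bool} {s t : ℕ} (hs : HasFormula h s) (hst : s ≤ t) :
    HasFormula h t :=
  hs.imp_right fun ⟨φ, hφ, hφh⟩ => ⟨φ, hφ.trans hst, hφh⟩

lemma HasFormula.gate {op : Bool → Bool → Bool} (hop : IsGate op) {f g : (ι → Bool) → Bool}
    {s t : ℕ} (hf : HasFormula f s) (hg : HasFormula g t) :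
    HasFormula (fun x => op (f x) (g x)) (s + t) := by
  have absorb {c : Bool} {h : (ι → Bool) → Bool} {r : ℕ} (hh : HasFormula h r) :
      HasFormula (fun x => op c (h x)) r := by
    rcases hop.const_or_id c with hc | hc <;> simp only [hc]
    exacts [Or.inl ⟨c, fun _ => rfl⟩, hh]
  rcases hf with ⟨c, hc⟩ | ⟨φ, hφ, hφf⟩
  · simp only [hc]
    exact (absorb hg).mono (Nat.le_add_left t s)
  rcases hg with ⟨c, hc⟩ | ⟨ψ, hψ, hψg⟩
  · simp only [hc, hop.comm _ c]
    exact (absorb (Or.inr ⟨φ, hφ, hφf⟩)).mono (Nat.le_add_right s t)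
  · rcases hop with rfl | rfl
    · exact Or.inr ⟨φ.and ψ, Nat.add_le_add hφ hψ, fun x => by rw [DMF.eval, hφf, hψg]⟩
    · exact Or.inr ⟨φ.or ψ, Nat.add_le_add hφ hψ, fun x => by rw [DMF.eval, hφf, hψg]⟩

lemma hasFormula_of_dependsOn {h : (ι → Bool) → Bool} {S : Finset ι} (hS : DependsOn h S) :
    HasFormula h (2 ^ (S.card + 1) - 2) := by
  classical
  induction S using Finset.induction_on generalizing h with
  | empty => exact Or.inl ⟨h fun _ => false, fun x => hS (by simp)⟩
  | insert i S hi ih =>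
    have literal (b : Bool) : HasFormula (fun x : ι → Bool => if b then x i else !x i) 1 :=
      Or.inr ⟨.leaf i b, le_rfl, fun _ => rfl⟩
    have branch (b : Bool) :
        HasFormula (fun x => h (Function.update x i b)) (2 ^ (S.card + 1) - 2) := by
      refine ih fun x y hxy => hS fun j hj => ?_
      rcases eq_or_ne j i with rfl | hji
      · simp
      · simpa [hji] using hxy j ((Finset.mem_insert.mp hj).resolve_left hji)
    have shannon : h = fun x => (if true then x i else !x i) && h (Function.update x i true) ||
        (if false then x i else !x i) && h (Function.update x i false) := by
      ext x
      conv_lhs => rw [← Function.update_eq_self i x]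
      cases x i <;> simp
    rw [shannon]
    refine (((literal true).gate (.inl rfl) (branch true)).gate (.inr rfl)
      ((literal false).gate (.inl rfl) (branch false))).mono ?_
    have two_le : 2 ≤ 2 ^ (S.card + 1) := Nat.le_self_pow (Nat.succ_ne_zero _) 2
    rw [Finset.card_insert_of_notMem hi, pow_succ 2 (S.card + 1)]
    omega

lemma Lc_const (c : Bool) : Lc (fun _ : ι → Bool => c) = 0 := if_pos ⟨c, fun _ => rfl⟩

lemma Lc_le_iff [Finite ι] {h : (ι → Bool) → Bool} {s : ℕ} : Lc h ≤ s ↔ HasFormula h s := by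
  have := Fintype.ofFinite ι
  unfold Lc
  split_ifs with hc
  · exact iff_of_true s.zero_le (Or.inl hc)
  · have exists_formula : {s | ∃ φ : DMF ι, φ.size = s ∧ ∀ x, φ.eval x = h x}.Nonempty := by
      have dependsOn_univ : DependsOn h (Finset.univ : Finset ι) := fun x y hxy =>
        congrArg h (funext fun i => hxy i (Finset.mem_coe.mpr (Finset.mem_univ i)))
      obtain ⟨φ, -, hφ⟩ := (hasFormula_of_dependsOn dependsOn_univ).resolve_left hc
      exact ⟨_, φ, rfl, hφ⟩
    refine ⟨fun hs => ?_, fun hs => ?_⟩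
    · obtain ⟨φ, hφ_size, hφ⟩ := Nat.sInf_mem exists_formula
      exact Or.inr ⟨φ, hφ_size.trans_le hs, hφ⟩
    · obtain ⟨φ, hφ_size, hφ⟩ := hs.resolve_left hc
      exact le_trans (Nat.sInf_le ⟨φ, rfl, hφ⟩) hφ_size

variable [Finite ι]

lemma Lc_eval_le (φ : DMF ι) : Lc φ.eval ≤ φ.size :=
  Lc_le_iff.mpr (Or.inr ⟨φ, le_rfl, fun _ => rfl⟩)

lemma Lc_gate_le {op : Bool → Bool → Bool} (hop : IsGate op) (f g : (ι → Bool) → Bool) :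
    Lc (fun x => op (f x) (g x)) ≤ Lc f + Lc g :=
  Lc_le_iff.mpr ((Lc_le_iff.mp le_rfl).gate hop (Lc_le_iff.mp le_rfl))

lemma Lc_le_of_dependsOn {h : (ι → Bool) → Bool} {S : Finset ι} (hS : DependsOn h S) :
    Lc h ≤ 2 ^ (S.card + 1) :=
  Lc_le_iff.mpr ((hasFormula_of_dependsOn hS).mono (Nat.sub_le _ _))

end FormulaComplexity

section MaximalMonomials

lemma card_le_of_isMaximalMonomial {ι : Type*} [Fintype ι] [DecidableEq ι]
    {f : (ι → Bool) → Bool} {d : ℕ} {𝒰 : Finset (Finset ι)}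
    (h𝒰 : ∀ U ∈ 𝒰, IsMaximalMonomial f U ∧ U.card ≤ d) : 𝒰.card ≤ 4 ^ d := by
  have real_bound : (𝒰.card : ℝ) ≤ 4 ^ d := by
    calc (𝒰.card : ℝ) = ∑ U ∈ 𝒰, 1 := by simp
      _ ≤ ∑ U ∈ 𝒰, 4 ^ d * walshCoeff U (boolInd f) ^ 2 := by
          refine Finset.sum_le_sum fun U hU => ?_
          refine (h𝒰 U hU).1.one_le_four_pow_mul_walshCoeff_sq.trans ?_
          gcongr
          exacts [by norm_num, (h𝒰 U hU).2]
      _ ≤ ∑ U, 4 ^ d * walshCoeff U (boolInd f) ^ 2 :=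
          Finset.sum_le_sum_of_subset_of_nonneg (Finset.subset_univ _)
            fun _ _ _ => by positivity
      _ ≤ 4 ^ d := by
          rw [← Finset.mul_sum]
          exact mul_le_of_le_one_right (by positivity) (sum_walshCoeff_boolInd_sq_le_one f)
  exact_mod_cast real_bound

lemma dependsOn_of_walshCoeff_support {ι : Type*} [Fintype ι] [DecidableEq ι]
    {f : (ι → Bool) → Bool} {S : Finset ι}
    (hS : ∀ T, walshCoeff T (boolInd f) ≠ 0 → T ⊆ S) : DependsOn f S := by
  intro x y hxy
  have boolInd_eq : boolInd f x = boolInd f y := by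
    rw [← sum_walshCoeff_mul_walsh (boolInd f) x, ← sum_walshCoeff_mul_walsh (boolInd f) y]
    refine Finset.sum_congr rfl fun T _ => ?_
    by_cases hT : walshCoeff T (boolInd f) = 0
    · simp only [hT, zero_mul]
    · congr 1
      exact Finset.prod_congr rfl fun i hi => by rw [hxy i (hS T hT hi)]
  cases hx : f x <;> cases hy : f y <;> simp_all [boolInd]

lemma Lc_le_of_isMaximalMonomial_card_le {ι : Type} [Fintype ι] [DecidableEq ι]
    {f : (ι → Bool) → Bool} {d : ℕ} (hd : ∀ U, IsMaximalMonomial f U → U.card ≤ d) :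
    Lc f ≤ 2 ^ (4 ^ d * d + 1) := by
  classical
  set 𝒰 : Finset (Finset ι) := Finset.univ.filter (IsMaximalMonomial f)
  have h𝒰 (U : Finset ι) : U ∈ 𝒰 ↔ IsMaximalMonomial f U := by simp [𝒰]
  have card_support : (𝒰.biUnion id).card ≤ 4 ^ d * d :=
    (Finset.card_biUnion_le_card_mul _ _ d fun U hU => hd U ((h𝒰 U).mp hU)).trans <|
      Nat.mul_le_mul_right d <|
        card_le_of_isMaximalMonomial fun U hU => ⟨(h𝒰 U).mp hU, hd U ((h𝒰 U).mp hU)⟩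
  have support_subset (T : Finset ι) (hT : walshCoeff T (boolInd f) ≠ 0) : T ⊆ 𝒰.biUnion id := by
    obtain ⟨U, hTU, hU⟩ :=
      (Set.toFinite {T | walshCoeff T (boolInd f) ≠ 0}).exists_le_maximal hT
    exact hTU.trans (Finset.subset_biUnion_of_mem id ((h𝒰 U).mpr hU))
  exact (Lc_le_of_dependsOn (dependsOn_of_walshCoeff_support support_subset)).trans
    (Nat.pow_le_pow_right two_pos (Nat.succ_le_succ card_support))

end MaximalMonomials

section Decomposition

variable {ι : Type}

/-- The function `f` is obtained by combining `B` functions of formula complexity at most `s` with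
AND and OR gates. -/
inductive IsCombination (s : ℕ) : ((ι → Bool) → Bool) → ℕ → Prop
  | piece {f : (ι → Bool) → Bool} (hf : Lc f ≤ s) : IsCombination s f 1
  | gate {op : Bool → Bool → Bool} {f g : (ι → Bool) → Bool} {A B : ℕ} (hop : IsGate op)
      (hf : IsCombination s f A) (hg : IsCombination s g B) :
      IsCombination s (fun x => op (f x) (g x)) (A + B)

/-- A monotone one-hole formula context of cost `c`: `K z x` is its value on the input `x` when the
hole carries the bit `z`. -/
structure IsContext (K : Bool → (ι → Bool) → Bool) (c : ℕ) : Prop where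
  monotone (x : ι → Bool) : Monotone fun z => K z x
  Lc_plug_le (h : (ι → Bool) → Bool) : Lc (fun x => K (h x) x) ≤ c + Lc h

lemma IsContext.hole : IsContext (fun z (_ : ι → Bool) => z) 0 :=
  ⟨fun _ => monotone_id, fun _ => (zero_add _).ge⟩

-- By monotonicity, `K z x = K false x || (K true x && z)`.
lemma IsContext.isCombination_plug {K : Bool → (ι → Bool) → Bool} {c s B : ℕ}
    (hK : IsContext K c) (hc : c ≤ s) {f : (ι → Bool) → Bool} (hf : IsCombination s f B) :
    IsCombination s (fun x => K (f x) x) (B + 2) := by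
  have piece (b : Bool) : IsCombination s (K b) 1 :=
    .piece ((hK.Lc_plug_le fun _ => b).trans (by rwa [Lc_const, add_zero]))
  have expansion : (fun x => K (f x) x) = fun x => K false x || (K true x && f x) := by
    ext x
    have hmono : K false x = true → K true x = true :=
      Bool.le_iff_imp.mp (hK.monotone x (Bool.false_le true))
    cases f x <;> cases h₀ : K false x <;> cases h₁ : K true x <;> simp_all
  rw [expansion, show B + 2 = 1 + (1 + B) by omega]
  exact (piece false).gate (.inr rfl) ((piece true).gate (.inl rfl) hf)

variable [Finite ι]

lemma IsContext.gate {K : Bool → (ι → Bool) → Bool} {c : ℕ} (hK : IsContext K c)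
    {op : Bool → Bool → Bool} (hop : IsGate op) (f : (ι → Bool) → Bool) :
    IsContext (fun z x => K (op (f x) z) x) (c + Lc f) where
  monotone x := (hK.monotone x).comp (hop.monotone (f x))
  Lc_plug_le h := by
    rw [add_assoc]
    exact (hK.Lc_plug_le _).trans (Nat.add_le_add_left (Lc_gate_le hop f h) c)

/-- The inductive invariant of the decomposition of a formula of size `a` computing `f`: once
`a > s`, the formula can be decomposed together with any context of cost at most `s` around it. The
number of pieces is charged to the context with weight `2` and to the formula with weight `6`. -/
def DecomposesInContext (s : ℕ) (f : (ι → Bool) → Bool) (a : ℕ) : Prop :=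
  Lc f ≤ a ∧ (s < a → ∀ K c, IsContext K c → c ≤ s →
    ∃ B, IsCombination s (fun x => K (f x) x) B ∧ s * B + 2 * s ≤ 2 * c + 6 * a)

lemma DecomposesInContext.exists_of_small_of_large {s a b c : ℕ} {op : Bool → Bool → Bool}
    (hop : IsGate op) {f g : (ι → Bool) → Bool} (hf : Lc f ≤ a) (ha : a ≤ s)
    (hg : DecomposesInContext s g b) (hb : s < b) {K : Bool → (ι → Bool) → Bool}
    (hK : IsContext K c) (hc : c ≤ s) :
    ∃ B, IsCombination s (fun x => K (op (f x) (g x)) x) B ∧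
      s * B + 2 * s ≤ 2 * c + 6 * (a + b) := by
  by_cases hca : c + Lc f ≤ s
  · obtain ⟨B, hB, hB_le⟩ := hg.2 hb _ _ (hK.gate hop f) hca
    exact ⟨B, hB, by omega⟩
  · obtain ⟨B, hB, hB_le⟩ := hg.2 hb _ _ (IsContext.hole.gate hop f) (by omega)
    exact ⟨B + 2, hK.isCombination_plug hc hB, by rw [mul_add]; omega⟩

lemma DecomposesInContext.gate {s a b : ℕ} {op : Bool → Bool → Bool} (hop : IsGate op)
    {f g : (ι → Bool) → Bool} (hf : DecomposesInContext s f a) (hg : DecomposesInContext s g b) :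
    DecomposesInContext s (fun x => op (f x) (g x)) (a + b) := by
  refine ⟨(Lc_gate_le hop f g).trans (Nat.add_le_add hf.1 hg.1), fun hs K c hK hc => ?_⟩
  rcases le_or_gt a s with ha | ha <;> rcases le_or_gt b s with hb | hb
  · have two_pieces := (IsCombination.piece (hf.1.trans ha)).gate hop (.piece (hg.1.trans hb))
    exact ⟨4, hK.isCombination_plug hc two_pieces, by omega⟩
  · exact exists_of_small_of_large hop hf.1 ha hg hb hK hc
  · simp only [hop.comm (f _), add_comm a]
    exact exists_of_small_of_large hop hg.1 hb hf ha hK hc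
  · obtain ⟨A, hA, hA_le⟩ := hf.2 ha _ _ IsContext.hole s.zero_le
    obtain ⟨B, hB, hB_le⟩ := hg.2 hb _ _ IsContext.hole s.zero_le
    exact ⟨A + B + 2, hK.isCombination_plug hc (.gate hop hA hB), by rw [mul_add, mul_add]; omega⟩

lemma decomposesInContext_eval {s : ℕ} (hs : 1 ≤ s) (φ : DMF ι) :
    DecomposesInContext s φ.eval φ.size := by
  induction φ with
  | leaf i b => exact ⟨Lc_eval_le _, fun h => absurd h hs.not_gt⟩
  | and φ ψ hφ hψ => exact hφ.gate (.inl rfl) hψ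
  | or φ ψ hφ hψ => exact hφ.gate (.inr rfl) hψ

theorem exists_isCombination {s : ℕ} (hs : 1 ≤ s) (f : (ι → Bool) → Bool) :
    ∃ B, IsCombination s f B ∧ s * B ≤ s + 6 * Lc f := by
  rcases le_or_gt (Lc f) s with hf | hf
  · exact ⟨1, .piece hf, by omega⟩
  rcases Lc_le_iff.mp (le_refl (Lc f)) with ⟨c, hc⟩ | ⟨φ, hφ_size, hφ⟩
  · exact ⟨1, .piece (by rw [funext hc, Lc_const]; exact s.zero_le), by omega⟩
  · obtain rfl : φ.eval = f := funext hφ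
    obtain ⟨B, hB, hB_le⟩ := (decomposesInContext_eval hs φ).2 (hf.trans_le (Lc_eval_le φ)) _ _
      IsContext.hole s.zero_le
    exact ⟨B, hB, by omega⟩

end Decomposition

section Shrinkage

variable {ι : Type} [Fintype ι] [DecidableEq ι] {p : ℝ} {s : ℕ}

lemma restrictionProb_lt_Lc_le_of_Lc_le (hp : p ∈ Set.Icc 0 1) {f : (ι → Bool) → Bool}
    (hf : Lc f ≤ s) (d : ℕ) :
    restrictionProb p (fun ρ => 2 ^ (4 ^ d * d + 1) < Lc (f ∘ fill ρ))
      ≤ 18 * (1024 * p * √s) ^ d := by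
  have hp₀ := hp.1
  rcases Lc_le_iff.mp hf with ⟨c, hc⟩ | ⟨φ, hφ_size, hφ⟩
  · have const_fill (ρ : ι → Option Bool) : f ∘ fill ρ = fun _ => c := funext fun _ => hc _
    simp only [const_fill, Lc_const, not_lt_zero]
    simp only [restrictionProb, restrictionExpect, if_false, mul_zero, Finset.sum_const_zero]
    positivity
  · obtain rfl : φ.eval = f := funext hφ
    calc restrictionProb p (fun ρ => 2 ^ (4 ^ d * d + 1) < Lc (φ.eval ∘ fill ρ))
        ≤ restrictionProb p fun ρ => ∃ U, d ≤ U.card ∧ IsMaximalMonomial (φ.eval ∘ fill ρ) U := by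
          refine restrictionProb_mono hp fun ρ => ?_
          contrapose!
          exact fun h => Lc_le_of_isMaximalMonomial_card_le fun U hU =>
            le_of_not_ge fun hdU => h U hdU hU
      _ ≤ 18 * (1024 * p * √φ.size) ^ d :=
          restrictionProb_exists_large_isMaximalMonomial_le hp φ d
      _ ≤ 18 * (1024 * p * √s) ^ d := by gcongr

lemma IsCombination.restrictionProb_lt_Lc_le (hp : p ∈ Set.Icc 0 1) {f : (ι → Bool) → Bool}
    {B : ℕ} (hf : IsCombination s f B) {C : ℕ} {τ : ℝ}
    (hτ : ∀ g : (ι → Bool) → Bool, Lc g ≤ s →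
      restrictionProb p (fun ρ => C < Lc (g ∘ fill ρ)) ≤ τ) :
    restrictionProb p (fun ρ => B * C < Lc (f ∘ fill ρ)) ≤ B * τ := by
  induction hf with
  | piece hf => simpa using hτ _ hf
  | @gate op f g A B hop _ _ hA hB =>
    calc restrictionProb p (fun ρ => (A + B) * C < Lc ((fun x => op (f x) (g x)) ∘ fill ρ))
        ≤ restrictionProb p fun ρ => A * C < Lc (f ∘ fill ρ) ∨ B * C < Lc (g ∘ fill ρ) := by
          refine restrictionProb_mono hp fun ρ hρ => ?_
          have subadditive := Lc_gate_le hop (f ∘ fill ρ) (g ∘ fill ρ)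
          rw [add_mul] at hρ
          by_contra! h
          exact absurd (hρ.trans_le subadditive) (by omega)
      _ ≤ A * τ + B * τ := (restrictionProb_or_le hp _ _).trans (add_le_add hA hB)
      _ = (A + B : ℕ) * τ := by push_cast; ring

lemma restrictionProb_mul_lt_Lc_le (hp : p ∈ Set.Icc 0 1) (hs : 1 ≤ s) {f : (ι → Bool) → Bool}
    {a : ℝ} (hf : Lc f ≤ a) (d : ℕ) :
    restrictionProb p (fun ρ => (1 + 6 * a / s) * 2 ^ (4 ^ d * d + 1) < (Lc (f ∘ fill ρ) : ℝ))
      ≤ (1 + 6 * a / s) * (18 * (1024 * p * √s) ^ d) := by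
  obtain ⟨B, hB, hB_le⟩ := exists_isCombination hs f
  have hs₀ : (0 : ℝ) < s := Nat.cast_pos.mpr hs
  have hp₀ := hp.1
  have B_le : (B : ℝ) ≤ 1 + 6 * a / s := by
    have hB_cast : (s : ℝ) * B ≤ s + 6 * Lc f := by exact_mod_cast hB_le
    rw [← div_self hs₀.ne', ← add_div, le_div_iff₀ hs₀]
    linarith
  calc restrictionProb p (fun ρ =>
        (1 + 6 * a / s) * 2 ^ (4 ^ d * d + 1) < (Lc (f ∘ fill ρ) : ℝ))
      ≤ restrictionProb p fun ρ => B * 2 ^ (4 ^ d * d + 1) < Lc (f ∘ fill ρ) := by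
        refine restrictionProb_mono hp fun ρ hρ => ?_
        have h : (B : ℝ) * 2 ^ (4 ^ d * d + 1) < Lc (f ∘ fill ρ) :=
          (mul_le_mul_of_nonneg_right B_le (by positivity)).trans_lt hρ
        exact_mod_cast h
    _ ≤ B * (18 * (1024 * p * √s) ^ d) :=
        hB.restrictionProb_lt_Lc_le hp fun g hg => restrictionProb_lt_Lc_le_of_Lc_le hp hg d
    _ ≤ (1 + 6 * a / s) * (18 * (1024 * p * √s) ^ d) := by gcongr

theorem le_restrictionProb_forall_Lc_le {κ : Type*} [Fintype κ] (hp : p ∈ Set.Icc 0 1)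
    (hs : 1 ≤ s) {f : κ → (ι → Bool) → Bool} {a : ℝ} (hf : ∀ j, Lc (f j) ≤ a) (d : ℕ) :
    1 - Fintype.card κ * ((1 + 6 * a / s) * (18 * (1024 * p * √s) ^ d))
      ≤ restrictionProb p fun ρ =>
        ∀ j, (Lc (f j ∘ fill ρ) : ℝ) ≤ (1 + 6 * a / s) * 2 ^ (4 ^ d * d + 1) := by
  set T := (1 + 6 * a / s) * 2 ^ (4 ^ d * d + 1)
  have union_bound : restrictionProb p (fun ρ => ¬∀ j, (Lc (f j ∘ fill ρ) : ℝ) ≤ T)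
      ≤ Fintype.card κ * ((1 + 6 * a / s) * (18 * (1024 * p * √s) ^ d)) := by
    calc restrictionProb p (fun ρ => ¬∀ j, (Lc (f j ∘ fill ρ) : ℝ) ≤ T)
        = restrictionProb p fun ρ => ∃ j ∈ Finset.univ, T < (Lc (f j ∘ fill ρ) : ℝ) := by
          simp only [not_forall, not_le, Finset.mem_univ, true_and]
      _ ≤ ∑ j, restrictionProb p fun ρ => T < (Lc (f j ∘ fill ρ) : ℝ) :=
          restrictionProb_exists_le hp _ _
      _ ≤ ∑ _j : κ, (1 + 6 * a / s) * (18 * (1024 * p * √s) ^ d) :=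
          Finset.sum_le_sum fun j _ => restrictionProb_mul_lt_Lc_le hp hs (hf j) d
      _ = Fintype.card κ * ((1 + 6 * a / s) * (18 * (1024 * p * √s) ^ d)) := by simp
  rw [restrictionProb_not] at union_bound
  linarith

end Shrinkage

section Asymptotics

open Filter

lemma eventually_mul_rpow_le {a b : ℝ} (hab : a < b) (c : ℝ) :
    ∀ᶠ n : ℕ in atTop, c * (n : ℝ) ^ a ≤ (n : ℝ) ^ b := by
  have gap := ((tendsto_rpow_atTop (sub_pos.mpr hab)).comp
    tendsto_natCast_atTop_atTop).eventually_ge_atTop c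
  filter_upwards [gap, eventually_gt_atTop 0] with n hn hn₀
  have hn₀ : (0 : ℝ) < n := Nat.cast_pos.mpr hn₀
  calc c * (n : ℝ) ^ a ≤ (n : ℝ) ^ (b - a) * (n : ℝ) ^ a := by gcongr; exact hn
    _ = (n : ℝ) ^ b := by rw [← Real.rpow_add hn₀, sub_add_cancel]

lemma one_add_div_ceil_rpow_le {x : ℝ} (hx : 1 ≤ x) (b c : ℝ) :
    1 + 6 * x ^ b / ⌈x ^ c⌉₊ ≤ 7 * x ^ max 0 (b - c) := by
  have hx₀ : 0 < x := zero_lt_one.trans_le hx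
  have one_le : 1 ≤ x ^ max 0 (b - c) := Real.one_le_rpow hx (le_max_left _ _)
  have div_le : x ^ b / ⌈x ^ c⌉₊ ≤ x ^ max 0 (b - c) :=
    calc x ^ b / ⌈x ^ c⌉₊ ≤ x ^ b / x ^ c := by gcongr; exact Nat.le_ceil _
      _ = x ^ (b - c) := (Real.rpow_sub hx₀ b c).symm
      _ ≤ x ^ max 0 (b - c) := Real.rpow_le_rpow_of_exponent_le hx (le_max_right _ _)
  rw [mul_div_assoc]
  linarith

lemma sqrt_ceil_rpow_le {x c : ℝ} (hx : 1 ≤ x) (hc : 0 ≤ c) :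
    √(⌈x ^ c⌉₊ : ℝ) ≤ 2 * x ^ (c / 2) := by
  have one_le : 1 ≤ x ^ c := Real.one_le_rpow hx hc
  have square : (x ^ (c / 2)) ^ 2 = x ^ c := by
    rw [← Real.rpow_mul_natCast (zero_le_one.trans hx)]
    norm_num
  refine Real.sqrt_le_iff.mpr ⟨by positivity, ?_⟩
  rw [mul_pow, square]
  linarith [Nat.ceil_le_two_mul (show 2⁻¹ ≤ x ^ c by linarith)]

lemma eventually_restriction_base_pow_le {η : ℝ} (hη₀ : 0 < η) (hη₁ : η ≤ 1) {p : ℕ → ℝ}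
    (hp : ∀ γ > (0 : ℝ), ∀ᶠ n : ℕ in atTop, p n ∈ Set.Icc 0 ((n : ℝ) ^ (γ - 1))) (d : ℕ) :
    ∀ᶠ n : ℕ in atTop, (1024 * p n * √(⌈(n : ℝ) ^ (2 - 2 * η)⌉₊ : ℝ)) ^ d
      ≤ 2048 ^ d * (n : ℝ) ^ (-(η / 2) * d) := by
  filter_upwards [hp (η / 2) (half_pos hη₀), eventually_ge_atTop 1] with n ⟨hp₀, hp_le⟩ hn
  have hn : (1 : ℝ) ≤ n := Nat.one_le_cast.mpr hn
  have hn₀ : (0 : ℝ) < n := zero_lt_one.trans_le hn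
  rw [Real.rpow_mul_natCast hn₀.le, ← mul_pow]
  refine pow_le_pow_left₀ (by positivity) ?_ d
  calc 1024 * p n * √(⌈(n : ℝ) ^ (2 - 2 * η)⌉₊ : ℝ)
      ≤ 1024 * (n : ℝ) ^ (η / 2 - 1) * (2 * (n : ℝ) ^ ((2 - 2 * η) / 2)) := by
        gcongr
        exact sqrt_ceil_rpow_le hn (by linarith)
    _ = 2048 * ((n : ℝ) ^ (η / 2 - 1) * (n : ℝ) ^ ((2 - 2 * η) / 2)) := by ring
    _ = 2048 * (n : ℝ) ^ (-(η / 2)) := by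
        rw [← Real.rpow_add hn₀]
        congr 2
        ring

lemma exists_shrinkage_parameters {α β δ ε : ℝ} {p : ℕ → ℝ}
    (hp : ∀ γ > (0 : ℝ), ∀ᶠ n : ℕ in atTop, p n ∈ Set.Icc 0 ((n : ℝ) ^ (γ - 1))) (hδ : 0 < δ)
    (hβδ : 2 < β + δ) (hε : 0 < ε) :
    ∃ (d : ℕ) (s : ℕ → ℕ), ∀ᶠ n : ℕ in atTop, 1 ≤ s n ∧
      (1 + 6 * (n : ℝ) ^ β / s n) * 2 ^ (4 ^ d * d + 1) ≤ (n : ℝ) ^ (β - 2 + δ) ∧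
      (n : ℝ) ^ α * ((1 + 6 * (n : ℝ) ^ β / s n) * (18 * (1024 * p n * √(s n)) ^ d)) ≤ ε := by
  obtain ⟨η, hη₀, hη⟩ : ∃ η, 0 < η ∧ η < min (δ / 2) 1 := exists_between (by positivity)
  obtain ⟨hηδ, hη₁⟩ := lt_min_iff.mp hη
  set κ := max 0 (β - (2 - 2 * η))
  have hκ : κ < β - 2 + δ := max_lt (by linarith) (by linarith)
  obtain ⟨d, hd⟩ : ∃ d : ℕ, (α + κ) / (η / 2) < d := exists_nat_gt _
  rw [div_lt_iff₀ (half_pos hη₀)] at hd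
  refine ⟨d, fun n => ⌈(n : ℝ) ^ (2 - 2 * η)⌉₊, ?_⟩
  filter_upwards [eventually_ge_atTop 1,
    eventually_restriction_base_pow_le hη₀ hη₁.le hp d, hp 1 one_pos,
    eventually_mul_rpow_le hκ (7 * 2 ^ (4 ^ d * d + 1)),
    eventually_mul_rpow_le (show α + κ + -(η / 2) * d < 0 by linarith)
      (7 * 18 * 2048 ^ d / ε)] with n hn base_pow_le ⟨hp₀, _⟩ size_le failure_le
  have hn : (1 : ℝ) ≤ n := Nat.one_le_cast.mpr hn
  have hn₀ : (0 : ℝ) < n := zero_lt_one.trans_le hn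
  have pieces_le := one_add_div_ceil_rpow_le hn β (2 - 2 * η)
  refine ⟨Nat.one_le_ceil_iff.mpr (by positivity), ?_, ?_⟩
  · refine le_trans ?_ size_le
    rw [mul_right_comm]
    gcongr
  · calc (n : ℝ) ^ α * ((1 + 6 * (n : ℝ) ^ β / ⌈(n : ℝ) ^ (2 - 2 * η)⌉₊) *
          (18 * (1024 * p n * √(⌈(n : ℝ) ^ (2 - 2 * η)⌉₊ : ℝ)) ^ d))
        ≤ (n : ℝ) ^ α * (7 * (n : ℝ) ^ κ * (18 * (2048 ^ d * (n : ℝ) ^ (-(η / 2) * d)))) := by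
          gcongr
      _ = ε * (7 * 18 * 2048 ^ d / ε * (n : ℝ) ^ (α + κ + -(η / 2) * d)) := by
          rw [Real.rpow_add hn₀, Real.rpow_add hn₀]
          field_simp
      _ ≤ ε := by
          rw [Real.rpow_zero] at failure_le
          exact mul_le_of_le_one_right hε.le failure_le

lemma eventually_log_logb_div_mem_Icc {γ : ℝ} (hγ : 0 < γ) :
    ∀ᶠ n : ℕ in atTop, 2 * Real.log (Real.logb 2 n) / n ∈ Set.Icc 0 ((n : ℝ) ^ (γ - 1)) := by
  have log_le := tendsto_natCast_atTop_atTop.eventually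
    ((isLittleO_log_rpow_atTop hγ).bound (show (0 : ℝ) < 1 / 4 by norm_num))
  filter_upwards [log_le, eventually_ge_atTop 2] with n hn hn₂
  have hn₂ : (2 : ℝ) ≤ n := Nat.ofNat_le_cast.mpr hn₂
  have hn₀ : (0 : ℝ) < n := two_pos.trans_le hn₂
  have one_le_logb : 1 ≤ Real.logb 2 n := by
    rwa [Real.le_logb_iff_rpow_le one_lt_two hn₀, Real.rpow_one]
  have logb_le : Real.logb 2 n ≤ 2 * Real.log n := by
    rw [Real.logb, div_le_iff₀ (Real.log_pos one_lt_two)]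
    nlinarith [Real.log_two_gt_d9, Real.log_nonneg (one_le_two.trans hn₂)]
  have log_logb_le := Real.log_le_sub_one_of_pos (zero_lt_one.trans_le one_le_logb)
  rw [Real.norm_of_nonneg (by positivity : (0 : ℝ) ≤ (n : ℝ) ^ γ)] at hn
  refine ⟨div_nonneg (mul_nonneg zero_le_two (Real.log_nonneg one_le_logb)) hn₀.le, ?_⟩
  rw [Real.rpow_sub_one hn₀.ne']
  gcongr
  linarith [Real.le_norm_self (Real.log n)]

end Asymptotics

open Classical in
theorem random_restriction_shrinkage_general {α β δ ε : ℝ} {p : ℕ → ℝ}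
    (hp : ∀ γ > (0 : ℝ), ∀ᶠ n : ℕ in Filter.atTop, p n ∈ Set.Icc 0 ((n : ℝ) ^ (γ - 1)))
    (hδ : 0 < δ) (hβδ : 2 < β + δ) (hε : 0 < ε) :
    ∃ n₀ : ℕ, ∀ n ≥ n₀, ∀ (M k : ℕ) (h : Fin k → (Fin M → Bool) → Bool),
      (k : ℝ) ≤ (n : ℝ) ^ α →
      (∀ i, (Lc (h i) : ℝ) ≤ (n : ℝ) ^ β) →
      1 - ε ≤ ∑ ρ : Fin M → Option Bool, (∏ i : Fin M, rWeight (p n) (ρ i)) *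
          (if ∀ i, (Lc (restrict (h i) ρ) : ℝ) ≤ (n : ℝ) ^ (β - 2 + δ) then 1 else 0) := by
  obtain ⟨d, s, hs⟩ := exists_shrinkage_parameters (α := α) hp hδ hβδ hε
  obtain ⟨n₀, hn₀⟩ := Filter.eventually_atTop.mp (hs.and (hp 1 one_pos))
  refine ⟨n₀, fun n hn M k h hk hh => ?_⟩
  obtain ⟨⟨one_le_s, size_le, failure_le⟩, hp_mem⟩ := hn₀ n hn
  rw [sub_self, Real.rpow_zero] at hp_mem
  have hp₀ := hp_mem.1
  calc 1 - ε
      ≤ 1 - k * ((1 + 6 * (n : ℝ) ^ β / s n) * (18 * (1024 * p n * √(s n)) ^ d)) := by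
        refine sub_le_sub_left (le_trans ?_ failure_le) 1
        gcongr
    _ ≤ restrictionProb (p n) fun ρ =>
          ∀ i, (Lc (h i ∘ fill ρ) : ℝ) ≤ (1 + 6 * (n : ℝ) ^ β / s n) * 2 ^ (4 ^ d * d + 1) := by
        simpa only [Fintype.card_fin] using le_restrictionProb_forall_Lc_le hp_mem one_le_s hh d
    _ ≤ restrictionProb (p n) fun ρ =>
          ∀ i, (Lc (restrict (h i) ρ) : ℝ) ≤ (n : ℝ) ^ (β - 2 + δ) :=
        restrictionProb_mono hp_mem fun ρ hρ i => (hρ i).trans size_le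
    _ = _ := restrictionProb_eq_sum _ _

open Classical in
/-- Lemma 4.6: for constants `0 < α < 2`, `2 < β < 3`, `δ > 0`,
`ε > 0`, for all large `n`, for any `M ≥ 1` and any at most `n^α` functions on
`{0,1}^M` of formula complexity at most `n^β`, with probability at least
`1 - ε` over the random restriction `R_p` with `p = 2 ln(log₂ n)/n`, all of the
restricted functions have formula complexity at most `n^{β-2+δ}`. -/
theorem random_restriction_shrinkage (α β δ ε : ℝ)
    (hα0 : 0 < α) (hα2 : α < 2) (hβ2 : 2 < β) (hβ3 : β < 3)
    (hδ : 0 < δ) (hε : 0 < ε) :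
    ∃ n₀ : ℕ, ∀ n ≥ n₀, ∀ M : ℕ, 1 ≤ M → ∀ (k : ℕ)
      (h : Fin k → (Fin M → Bool) → Bool),
      (k : ℝ) ≤ (n : ℝ) ^ α →
      (∀ i, (Lc (h i) : ℝ) ≤ (n : ℝ) ^ β) →
      1 - ε ≤ ∑ ρ : Fin M → Option Bool,
          (∏ i : Fin M, rWeight (2 * Real.log (Real.logb 2 n) / n) (ρ i)) *
          (if ∀ i, (Lc (restrict (h i) ρ) : ℝ) ≤ (n : ℝ) ^ (β - 2 + δ) then 1 else 0) := by
  obtain ⟨n₀, hn₀⟩ := random_restriction_shrinkage_general (α := α) (β := β)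
    (fun _ => eventually_log_logb_div_mem_Icc) hδ (by linarith) hε
  exact ⟨n₀, fun n hn M _ k h => hn₀ n hn M k h⟩
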